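/- For the exponential random graph model with parameter β in Dobrushin's uniqueness region Φ_β'(1) < 2 (with β subcritical), let H be any fixed finite graph, possibly with isolated vertices, with v vertices and e ≥ 1 edges. Then there exists a constant C > 0, depending only on β₁,…,β_k, H₁,…,H_k and H, such that for all n, Var(|Hom(H, G_Y)| − 2 n^{v−2} e p^{e−1} σ_n W_n) ≤ C n^{2v−3}. -/

import Mathlib

open MeasureTheory ProbabilityTheory Real Finset

noncomputable section

/-- The index set `I = {(i,j) : 1 ≤ i < j ≤ n}` of potential edges on `n` labeled vertices. -/
def EdgeIdx (n : ℕ) : Type := {p : Fin n × Fin n // p.1 < p.2}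

instance (n : ℕ) : Fintype (EdgeIdx n) := by unfold EdgeIdx; infer_instance
instance (n : ℕ) : DecidableEq (EdgeIdx n) := by unfold EdgeIdx; infer_instance

/-- Adjacency of the graph `G_y` encoded by the edge-indicator vector `y`. -/
def yAdj {n : ℕ} (y : EdgeIdx n → Bool) (a b : Fin n) : Bool :=
  if h : a < b then y ⟨(a, b), h⟩ else if h' : b < a then y ⟨(b, a), h'⟩ else false

/-- The number of edges of a graph `H`. -/
def eCount {V : Type} [Fintype V] (H : SimpleGraph V) : ℕ :=
  Nat.card H.edgeSet

/-- `|Hom(H, G_y)|`: the number of injective maps from the vertex set of `H` to `Fin n`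
mapping every edge of `H` to an edge of `G_y`. -/
def homCount {V : Type} [Fintype V] {n : ℕ} (H : SimpleGraph V) (y : EdgeIdx n → Bool) : ℕ :=
  Nat.card {φ : V → Fin n //
    Function.Injective φ ∧ ∀ a b, H.Adj a b → yAdj y (φ a) (φ b) = true}

/-- `|Hom(H, G_y, s)|`: the number of pairs `(φ, (u, v))` where `φ` is injective, `(u, v)` is
an ordered pair of adjacent vertices of `H` with `{φ u, φ v} = s`, and every edge of `H` other
than `{u, v}` is mapped by `φ` to an edge of `G_y` (regardless of whether the edge `s` is
present in `G_y`). -/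
def homCountAt {V : Type} [Fintype V] {n : ℕ} (H : SimpleGraph V) (y : EdgeIdx n → Bool)
    (s : EdgeIdx n) : ℕ :=
  Nat.card {t : (V → Fin n) × V × V //
    Function.Injective t.1 ∧ H.Adj t.2.1 t.2.2 ∧
    Sym2.mk (t.1 t.2.1, t.1 t.2.2) = Sym2.mk (s.1.1, s.1.2) ∧
    ∀ a b, H.Adj a b → Sym2.mk (a, b) ≠ Sym2.mk (t.2.1, t.2.2) →
      yAdj y (t.1 a) (t.1 b) = true}

section ERGM

variable {k : ℕ} (β : Fin (k + 1) → ℝ) (v : Fin (k + 1) → ℕ)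
  (H : ∀ j : Fin (k + 1), SimpleGraph (Fin (v j)))

/-- The (unnormalized) ERGM weight `exp (Σ_j β_j n^{2−v_j} |Hom(H_j, G_y)|)`. -/
def ergmWeight (n : ℕ) (y : EdgeIdx n → Bool) : ℝ :=
  Real.exp (∑ j, β j * (n : ℝ) ^ ((2 : ℤ) - (v j : ℤ)) * (homCount (H j) y : ℝ))

/-- The ERGM normalizing constant. -/
def ergmZ (n : ℕ) : ℝ := ∑ y : EdgeIdx n → Bool, ergmWeight β v H n y

/-- The ERGM probability of the configuration `y`. -/
def ergmProb (n : ℕ) (y : EdgeIdx n → Bool) : ℝ := ergmWeight β v H n y / ergmZ β v H n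

/-- Expectation of `G(Y)` under the ERGM. -/
def ergmExp (n : ℕ) (G : (EdgeIdx n → Bool) → ℝ) : ℝ :=
  ∑ y : EdgeIdx n → Bool, ergmProb β v H n y * G y

/-- Variance of `G(Y)` under the ERGM. -/
def ergmVar (n : ℕ) (G : (EdgeIdx n → Bool) → ℝ) : ℝ :=
  ergmExp β v H n (fun y => (G y - ergmExp β v H n G) ^ 2)

/-- The total number of edges of `G_y`. -/
def edgeSum {n : ℕ} (y : EdgeIdx n → Bool) : ℝ :=
  ∑ s : EdgeIdx n, (if y s then (1 : ℝ) else 0)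

/-- `Φ_β(a) = Σ_j β_j e_j a^{e_j − 1}`. -/
def PhiFn : ℝ → ℝ := fun a =>
  ∑ j, β j * (eCount (H j) : ℝ) * a ^ (eCount (H j) - 1)

/-- `φ_β(a) = e^{2Φ_β(a)} / (e^{2Φ_β(a)} + 1)`. -/
def phiFn : ℝ → ℝ := fun a =>
  Real.exp (2 * PhiFn β v H a) / (Real.exp (2 * PhiFn β v H a) + 1)

/-- `σ_n² = N p (1−p) / (1 − 2 p (1−p) Φ_β'(p))` with `N = n(n−1)/2`. -/
def sigmaSq (p : ℝ) (n : ℕ) : ℝ :=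
  ((n : ℝ) * ((n : ℝ) - 1) / 2) * p * (1 - p) /
    (1 - 2 * p * (1 - p) * deriv (PhiFn β v H) p)

/-- `μ_n = E Σ_{s ∈ I} Y_s`. -/
def muN (n : ℕ) : ℝ := ergmExp β v H n (edgeSum)

/-- The standardized number of edges `W_n`. -/
def Wn (p : ℝ) (n : ℕ) (y : EdgeIdx n → Bool) : ℝ :=
  (edgeSum y - muN β v H n) / Real.sqrt (sigmaSq β v H p n)

end ERGM

/-!
Glauber dynamics resamples one edge at a time from its conditional law. Under Dobrushin's condition
it contracts the discrete derivatives of every function uniformly; the dynamics being reversible,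
this contraction forces a spectral gap, that is, a Poincaré inequality
`(1 - θ) Var f ≤ ∑ s, E (∂ₛ f)²`.

For a subgraph count `f`, the derivative `∂ₛ f` counts the copies through the edge `s`, and its own
derivatives count the copies through two edges, which are fewer by a factor `n`. The Poincaré
inequality applied to `∂ₛ f` therefore makes `∂ₛ f` concentrate. The conditional probability of an
edge is a sigmoid of such derivatives, so it concentrates too, and edges are nearly independent.
Hence the edge probabilities nearly solve the equation `φ_β(a) = a`, and they are close to `p`
because the same influence bound `θ < 1` makes the mean-field map a contraction.

Each `∂ₛ f` is thus within `O(n^(v - 5/2))` in mean square of the constant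
`2 n^(v - 2) e p^(e - 1)`, which is the derivative of the edge-count term subtracted from `f`. The
Poincaré inequality applied to the difference, with its `O(n²)` directions, gives `O(n^(2v - 3))`.
-/

/-! ### Finite weighted means -/

section WeightedMean

variable {Ω : Type*} [Fintype Ω]

/-- The mean of `f` under the weights `μ`, a bare function like `ergmProb` that need not sum
to `1`. -/
def wMean (μ f : Ω → ℝ) : ℝ := ∑ y, μ y * f y

/-- The variance of `f` under the weights `μ`. -/
def wVar (μ f : Ω → ℝ) : ℝ := wMean μ fun y => (f y - wMean μ f) ^ 2

variable {μ : Ω → ℝ}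

theorem wMean_sub (f g : Ω → ℝ) :
    wMean μ (fun y => f y - g y) = wMean μ f - wMean μ g := by
  simp [wMean, mul_sub, Finset.sum_sub_distrib]

theorem wMean_sum {ι : Type*} (T : Finset ι) (f : ι → Ω → ℝ) :
    wMean μ (fun y => ∑ i ∈ T, f i y) = ∑ i ∈ T, wMean μ (f i) := by
  simp only [wMean, Finset.mul_sum]
  exact Finset.sum_comm

theorem wMean_const_mul (c : ℝ) (f : Ω → ℝ) :
    wMean μ (fun y => c * f y) = c * wMean μ f := by
  simp only [wMean, Finset.mul_sum, mul_left_comm]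

theorem wMean_const (h1 : ∑ y, μ y = 1) (c : ℝ) : wMean μ (fun _ => c) = c := by
  simp [wMean, ← Finset.sum_mul, h1]

theorem wMean_nonneg (hμ : ∀ y, 0 ≤ μ y) {f : Ω → ℝ} (hf : ∀ y, 0 ≤ f y) : 0 ≤ wMean μ f :=
  Finset.sum_nonneg fun y _ => mul_nonneg (hμ y) (hf y)

theorem wMean_mono (hμ : ∀ y, 0 ≤ μ y) {f g : Ω → ℝ} (h : ∀ y, f y ≤ g y) :
    wMean μ f ≤ wMean μ g :=
  Finset.sum_le_sum fun y _ => mul_le_mul_of_nonneg_left (h y) (hμ y)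

theorem wMean_le_of_le (hμ : ∀ y, 0 ≤ μ y) (h1 : ∑ y, μ y = 1) {f : Ω → ℝ} {c : ℝ}
    (h : ∀ y, f y ≤ c) : wMean μ f ≤ c :=
  (wMean_mono hμ h).trans_eq (wMean_const h1 c)

theorem abs_wMean_le (hμ : ∀ y, 0 ≤ μ y) (f : Ω → ℝ) :
    |wMean μ f| ≤ wMean μ (fun y => |f y|) := by
  refine (Finset.abs_sum_le_sum_abs _ _).trans_eq ?_
  simp only [abs_mul, abs_of_nonneg (hμ _), wMean]

theorem abs_wMean_sub_le (hμ : ∀ y, 0 ≤ μ y) (h1 : ∑ y, μ y = 1) {f : Ω → ℝ} {a c : ℝ}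
    (h : ∀ y, |f y - a| ≤ c) : |wMean μ f - a| ≤ c := by
  rw [← wMean_const h1 a, ← wMean_sub]
  exact (abs_wMean_le hμ _).trans (wMean_le_of_le hμ h1 h)

theorem sq_wMean_mul_le (hμ : ∀ y, 0 ≤ μ y) (f g : Ω → ℝ) :
    wMean μ (fun y => f y * g y) ^ 2 ≤
      wMean μ (fun y => f y ^ 2) * wMean μ (fun y => g y ^ 2) :=
  Finset.sum_sq_le_sum_mul_sum_of_sq_le_mul _
    (fun y _ => mul_nonneg (hμ y) (sq_nonneg _)) (fun y _ => mul_nonneg (hμ y) (sq_nonneg _))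
    (fun y _ => le_of_eq (by ring))

theorem wMean_sub_const_sq (h1 : ∑ y, μ y = 1) (f : Ω → ℝ) (a : ℝ) :
    wMean μ (fun y => (f y - a) ^ 2) = wVar μ f + (wMean μ f - a) ^ 2 := by
  have expand (b : ℝ) : wMean μ (fun y => (f y - b) ^ 2) =
      wMean μ (fun y => f y ^ 2) - 2 * b * wMean μ f + b ^ 2 := by
    calc wMean μ (fun y => (f y - b) ^ 2)
        = wMean μ (fun y => (f y ^ 2 - 2 * b * f y) - -b ^ 2) := by congr 1; ext y; ring
      _ = _ := by rw [wMean_sub, wMean_sub, wMean_const_mul, wMean_const h1]; ring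
  rw [wVar, expand, expand]
  ring

theorem wMean_abs_sub_le_sqrt_wVar (hμ : ∀ y, 0 ≤ μ y) (h1 : ∑ y, μ y = 1) (f : Ω → ℝ) :
    wMean μ (fun y => |f y - wMean μ f|) ≤ √(wVar μ f) := by
  refine Real.le_sqrt_of_sq_le ?_
  simpa [wMean_const h1, wVar] using
    sq_wMean_mul_le hμ (fun y => |f y - wMean μ f|) (fun _ => 1)

/-- The ratios of a log-convex sequence are nondecreasing, so `b` would otherwise outgrow
`C * ρ ^ k`. -/
theorem le_mul_of_logConvex {b : ℕ → ℝ} {C ρ : ℝ} (hb : ∀ k, 0 ≤ b k)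
    (hconv : ∀ k, b (k + 1) ^ 2 ≤ b k * b (k + 2)) (hρ : 0 ≤ ρ)
    (hbound : ∀ k, b k ≤ C * ρ ^ k) : b 1 ≤ ρ * b 0 := by
  rcases (hb 0).eq_or_lt with h0 | h0
  · have := hconv 0
    rw [← h0, zero_mul] at this
    rw [pow_eq_zero_iff two_ne_zero |>.1 (this.antisymm (sq_nonneg _)), ← h0, mul_zero]
  by_contra! hlt
  obtain ⟨r, hr⟩ : ∃ r, b 1 = r * b 0 := ⟨b 1 / b 0, by field_simp⟩
  have hρr : ρ < r := lt_of_mul_lt_mul_right (hr ▸ hlt) h0.le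
  have hr0 : 0 < r := hρ.trans_lt hρr
  have hgrow : ∀ k, 0 < b k ∧ r * b k ≤ b (k + 1) := by
    intro k
    induction k with
    | zero => exact ⟨h0, hr.ge⟩
    | succ k ih =>
      obtain ⟨hk, hle⟩ := ih
      have hk1 : 0 < b (k + 1) := (mul_pos hr0 hk).trans_le hle
      refine ⟨hk1, le_of_mul_le_mul_left ?_ hk⟩
      calc b k * (r * b (k + 1)) = (r * b k) * b (k + 1) := by ring
        _ ≤ b (k + 1) * b (k + 1) := mul_le_mul_of_nonneg_right hle hk1.le
        _ = b (k + 1) ^ 2 := (sq _).symm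
        _ ≤ b k * b (k + 2) := hconv k
  have hpow : ∀ k, r ^ k * b 0 ≤ b k := fun k => geom_le hr0.le k fun j _ => (hgrow j).2
  have hlim : Filter.Tendsto (fun k => C * (ρ / r) ^ k) Filter.atTop (nhds (C * 0)) :=
    (tendsto_pow_atTop_nhds_zero_of_lt_one (by positivity) ((div_lt_one hr0).2 hρr)).const_mul C
  have hle : b 0 ≤ C * 0 := ge_of_tendsto' hlim fun k => by
    rw [div_pow, ← mul_div_assoc, le_div_iff₀' (pow_pos hr0 k)]
    exact (hpow k).trans (hbound k)
  linarith

/-- Since `T` is self-adjoint, the squared norms of the iterates `T^[k] f` are log-convex in `k`, so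
their growth rate already bounds `T` at `f`. -/
theorem wMean_mul_apply_le (hμ : ∀ y, 0 ≤ μ y) {T : (Ω → ℝ) → Ω → ℝ}
    (hT : ∀ f g, wMean μ (fun y => T f y * g y) = wMean μ (fun y => f y * T g y))
    {f : Ω → ℝ} {C ρ : ℝ} (hρ : 0 ≤ ρ)
    (hbound : ∀ k, wMean μ (fun y => (T^[k] f) y ^ 2) ≤ C * (ρ ^ 2) ^ k) :
    wMean μ (fun y => f y * T f y) ≤ ρ * wMean μ (fun y => f y ^ 2) := by
  have hnn : ∀ g : Ω → ℝ, 0 ≤ wMean μ (fun y => g y ^ 2) := fun g =>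
    wMean_nonneg hμ fun y => sq_nonneg (g y)
  have hconv (g : Ω → ℝ) : wMean μ (fun y => T g y ^ 2) ^ 2 ≤
      wMean μ (fun y => g y ^ 2) * wMean μ (fun y => T (T g) y ^ 2) := by
    simpa only [sq (T g _), hT] using sq_wMean_mul_le hμ g (T (T g))
  have hnorm : wMean μ (fun y => T f y ^ 2) ≤ ρ ^ 2 * wMean μ (fun y => f y ^ 2) :=
    le_mul_of_logConvex (b := fun k => wMean μ fun y => (T^[k] f) y ^ 2) (fun _ => hnn _)
      (fun k => by simpa only [Function.iterate_succ_apply'] using hconv (T^[k] f))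
      (sq_nonneg ρ) hbound
  refine abs_le_of_sq_le_sq' ?_ (mul_nonneg hρ (hnn f)) |>.2
  calc wMean μ (fun y => f y * T f y) ^ 2
      ≤ wMean μ (fun y => f y ^ 2) * wMean μ (fun y => T f y ^ 2) := sq_wMean_mul_le hμ _ _
    _ ≤ wMean μ (fun y => f y ^ 2) * (ρ ^ 2 * wMean μ (fun y => f y ^ 2)) :=
      mul_le_mul_of_nonneg_left hnorm (hnn f)
    _ = (ρ * wMean μ (fun y => f y ^ 2)) ^ 2 := by ring

end WeightedMean

/-! ### Glauber dynamics and the Poincaré inequality -/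

section SpinSystem

variable {S : Type*} [DecidableEq S]

/-- The discrete derivative of `f` in the direction of the coordinate `s`. -/
def discDeriv (s : S) (f : (S → Bool) → ℝ) (y : S → Bool) : ℝ :=
  f (Function.update y s true) - f (Function.update y s false)

/-- The conditional probability under the weights `μ` that the spin at `s` is `true`, given the
other spins of `y`. -/
def condProb (μ : (S → Bool) → ℝ) (s : S) (y : S → Bool) : ℝ :=
  μ (Function.update y s true) / (μ (Function.update y s true) + μ (Function.update y s false))

/-- The heat-bath (Glauber) update at `s`: the conditional expectation of `f` given all spins
other than the one at `s`. -/
def glauber (μ : (S → Bool) → ℝ) (s : S) (f : (S → Bool) → ℝ) (y : S → Bool) : ℝ :=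
  condProb μ s y * f (Function.update y s true) +
    (1 - condProb μ s y) * f (Function.update y s false)

theorem update_true_eq_self_or_update_false_eq_self (s : S) (y : S → Bool) :
    Function.update y s true = y ∨ Function.update y s false = y := by
  cases h : y s
  · exact .inr (h ▸ Function.update_eq_self s y)
  · exact .inl (h ▸ Function.update_eq_self s y)

theorem abs_update_sub_self_le (f : (S → Bool) → ℝ) (s : S) (y : S → Bool) (b : Bool) :
    |f (Function.update y s b) - f y| ≤ |discDeriv s f y| := by
  rcases update_true_eq_self_or_update_false_eq_self s y with h | h <;> cases b <;>
    simp [discDeriv, h, abs_sub_comm]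

theorem discDeriv_sub_const (s : S) (f : (S → Bool) → ℝ) (a : ℝ) :
    discDeriv s (fun y => f y - a) = discDeriv s f := by
  ext y
  simp [discDeriv]

theorem discDeriv_discDeriv_self (f : (S → Bool) → ℝ) (s : S) (y : S → Bool) :
    discDeriv s (discDeriv s f) y = 0 := by
  simp [discDeriv]

theorem discDeriv_sum {ι : Type*} (T : Finset ι) (s : S) (f : ι → (S → Bool) → ℝ)
    (y : S → Bool) :
    discDeriv s (fun y => ∑ i ∈ T, f i y) y = ∑ i ∈ T, discDeriv s (f i) y := by
  simp [discDeriv, Finset.sum_sub_distrib]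

theorem condProb_update (μ : (S → Bool) → ℝ) (s : S) (y : S → Bool) (b : Bool) :
    condProb μ s (Function.update y s b) = condProb μ s y := by
  simp [condProb]

theorem glauber_update (μ : (S → Bool) → ℝ) (s : S) (f : (S → Bool) → ℝ) (y : S → Bool)
    (b : Bool) : glauber μ s f (Function.update y s b) = glauber μ s f y := by
  simp [glauber, condProb_update]

theorem discDeriv_glauber_self (μ : (S → Bool) → ℝ) (s : S) (f : (S → Bool) → ℝ)
    (y : S → Bool) : discDeriv s (glauber μ s f) y = 0 := by
  simp [discDeriv, glauber_update]

theorem discDeriv_glauber (μ : (S → Bool) → ℝ) {s t : S} (hst : s ≠ t) (f : (S → Bool) → ℝ)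
    (y : S → Bool) :
    discDeriv t (glauber μ s f) y =
      condProb μ s (Function.update y t true) * discDeriv t f (Function.update y s true) +
      (1 - condProb μ s (Function.update y t true)) *
        discDeriv t f (Function.update y s false) +
      discDeriv t (condProb μ s) y * discDeriv s f (Function.update y t false) := by
  simp only [discDeriv, glauber, Function.update_comm hst]
  ring

theorem condProb_mem_Icc {μ : (S → Bool) → ℝ} (hμ : ∀ y, 0 ≤ μ y) (s : S) (y : S → Bool) :
    condProb μ s y ∈ Set.Icc 0 1 :=
  ⟨div_nonneg (hμ _) (add_nonneg (hμ _) (hμ _)),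
    div_le_one_of_le₀ (le_add_of_nonneg_right (hμ _)) (add_nonneg (hμ _) (hμ _))⟩

theorem abs_discDeriv_glauber_le {μ : (S → Bool) → ℝ} (hμ : ∀ y, 0 ≤ μ y) {s t : S}
    (hst : s ≠ t) {f : (S → Bool) → ℝ} {M r : ℝ} (hf : ∀ t y, |discDeriv t f y| ≤ M)
    {y : S → Bool} (hr : |discDeriv t (condProb μ s) y| ≤ r) :
    |discDeriv t (glauber μ s f) y| ≤ M + r * M := by
  obtain ⟨hp0, hp1⟩ := condProb_mem_Icc hμ s (Function.update y t true)
  set q := condProb μ s (Function.update y t true)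
  rw [discDeriv_glauber μ hst]
  refine (abs_add_le _ _).trans (add_le_add ?_ ?_)
  · calc |q * discDeriv t f (Function.update y s true) +
          (1 - q) * discDeriv t f (Function.update y s false)|
        ≤ q * M + (1 - q) * M := by
          refine (abs_add_le _ _).trans (add_le_add ?_ ?_)
          · rw [abs_mul, abs_of_nonneg hp0]
            exact mul_le_mul_of_nonneg_left (hf _ _) hp0
          · rw [abs_mul, abs_of_nonneg (sub_nonneg.2 hp1)]
            exact mul_le_mul_of_nonneg_left (hf _ _) (sub_nonneg.2 hp1)
      _ = M := by ring
  · rw [abs_mul]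
    exact mul_le_mul hr (hf _ _) (abs_nonneg _) ((abs_nonneg _).trans hr)

theorem abs_self_sub_glauber_le {μ : (S → Bool) → ℝ} (hμ : ∀ y, 0 ≤ μ y) (s : S)
    (f : (S → Bool) → ℝ) (y : S → Bool) : |f y - glauber μ s f y| ≤ |discDeriv s f y| := by
  obtain ⟨hp0, hp1⟩ := condProb_mem_Icc hμ s y
  rcases update_true_eq_self_or_update_false_eq_self s y with h | h
  · have : f y - glauber μ s f y = (1 - condProb μ s y) * discDeriv s f y := by
      simp only [glauber, discDeriv, h]; ring
    rw [this, abs_mul, abs_of_nonneg (sub_nonneg.2 hp1)]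
    exact mul_le_of_le_one_left (abs_nonneg _) (by linarith)
  · have : f y - glauber μ s f y = -(condProb μ s y * discDeriv s f y) := by
      simp only [glauber, discDeriv, h]; ring
    rw [this, abs_neg, abs_mul, abs_of_nonneg hp0]
    exact mul_le_of_le_one_left (abs_nonneg _) hp1

variable [Fintype S]

theorem abs_sub_le_card_mul {f : (S → Bool) → ℝ} {M : ℝ} (hf : ∀ s y, |discDeriv s f y| ≤ M)
    (y z : S → Bool) : |f z - f y| ≤ Fintype.card S * M := by
  suffices h : ∀ T : Finset S, |f (T.piecewise z y) - f y| ≤ #T * M by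
    simpa using h univ
  intro T
  induction T using Finset.induction_on with
  | empty => simp
  | insert a T ha ih =>
    rw [Finset.piecewise_insert, Finset.card_insert_of_notMem ha, Nat.cast_succ, add_mul, one_mul,
      add_comm]
    exact (abs_sub_le _ _ _).trans
      (add_le_add ((abs_update_sub_self_le f a _ _).trans (hf _ _)) ih)

theorem sum_update_add_sum_update (s : S) (F : (S → Bool) → ℝ) :
    ∑ y, (F (Function.update y s true) + F (Function.update y s false)) = 2 * ∑ y, F y := by
  have hinv : Function.Involutive (fun y : S → Bool => Function.update y s (!y s)) :=
    fun y => by simp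
  have hpair (y : S → Bool) : F (Function.update y s true) + F (Function.update y s false) =
      F y + F (Function.update y s (!y s)) := by
    have hself := Function.update_eq_self s y
    cases h : y s <;> rw [h] at hself <;> simp [hself, add_comm]
  simp only [hpair, Finset.sum_add_distrib, two_mul]
  congr 1
  exact Equiv.sum_comp hinv.toPerm F

theorem wMean_glauber_mul_glauber {μ : (S → Bool) → ℝ} (hμ : ∀ y, 0 < μ y) (s : S)
    (f g : (S → Bool) → ℝ) :
    wMean μ (fun y => glauber μ s f y * glauber μ s g y) =
      wMean μ (fun y => glauber μ s f y * g y) := by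
  refine mul_left_cancel₀ (two_ne_zero (α := ℝ)) ?_
  simp only [wMean, ← sum_update_add_sum_update s (fun y => μ y * _), glauber_update]
  refine Finset.sum_congr rfl fun y _ => ?_
  have h1 := hμ (Function.update y s true)
  have h0 := hμ (Function.update y s false)
  have hg : glauber μ s g y * (μ (Function.update y s true) + μ (Function.update y s false)) =
      μ (Function.update y s true) * g (Function.update y s true) +
      μ (Function.update y s false) * g (Function.update y s false) := by
    unfold glauber condProb
    field_simp
    ring
  linear_combination glauber μ s f y * hg

theorem wMean_glauber_mul {μ : (S → Bool) → ℝ} (hμ : ∀ y, 0 < μ y) (s : S)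
    (f g : (S → Bool) → ℝ) :
    wMean μ (fun y => glauber μ s f y * g y) = wMean μ (fun y => f y * glauber μ s g y) := by
  rw [← wMean_glauber_mul_glauber hμ]
  simpa only [mul_comm] using wMean_glauber_mul_glauber hμ s g f

theorem wMean_glauber {μ : (S → Bool) → ℝ} (hμ : ∀ y, 0 < μ y) (s : S)
    (f : (S → Bool) → ℝ) : wMean μ (glauber μ s f) = wMean μ f := by
  have hone : glauber μ s (fun _ => 1) = fun _ => 1 := by ext y; simp [glauber]
  simpa only [hone, mul_one] using wMean_glauber_mul hμ s f fun _ => 1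

theorem wMean_sq_sub_mul_glauber_le {μ : (S → Bool) → ℝ} (hμ : ∀ y, 0 < μ y) (s : S)
    (f : (S → Bool) → ℝ) :
    wMean μ (fun y => f y ^ 2) - wMean μ (fun y => f y * glauber μ s f y) ≤
      wMean μ (fun y => discDeriv s f y ^ 2) := by
  have hsq : wMean μ (fun y => f y ^ 2) - wMean μ (fun y => f y * glauber μ s f y) =
      wMean μ (fun y => (f y - glauber μ s f y) ^ 2) := by
    have expand : (fun y => (f y - glauber μ s f y) ^ 2) =
        fun y => (f y ^ 2 - f y * glauber μ s f y) -
          (glauber μ s f y * f y - glauber μ s f y * glauber μ s f y) := by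
      ext y; ring
    rw [expand, wMean_sub, wMean_sub (fun y => glauber μ s f y * f y),
      wMean_glauber_mul_glauber hμ, sub_self, sub_zero, wMean_sub]
  rw [hsq]
  exact wMean_mono (fun y => (hμ y).le) fun y =>
    sq_le_sq.2 (abs_self_sub_glauber_le (fun y => (hμ y).le) s f y)

section Dobrushin

/-- `card S` times the transition operator of the random-site Glauber dynamics. -/
def glauberSum (μ f : (S → Bool) → ℝ) (y : S → Bool) : ℝ := ∑ s, glauber μ s f y

variable {μ : (S → Bool) → ℝ} {R : S → S → ℝ} {θ : ℝ}

theorem wMean_glauberSum_mul (hμ : ∀ y, 0 < μ y) (f g : (S → Bool) → ℝ) :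
    wMean μ (fun y => glauberSum μ f y * g y) = wMean μ (fun y => f y * glauberSum μ g y) := by
  simp only [glauberSum, Finset.sum_mul, Finset.mul_sum, wMean_sum, wMean_glauber_mul hμ]

theorem wMean_glauberSum (hμ : ∀ y, 0 < μ y) (f : (S → Bool) → ℝ) :
    wMean μ (glauberSum μ f) = Fintype.card S * wMean μ f := by
  calc wMean μ (glauberSum μ f) = ∑ s, wMean μ (glauber μ s f) := wMean_sum univ _
    _ = Fintype.card S * wMean μ f := by simp [wMean_glauber hμ]

theorem abs_discDeriv_glauberSum_le (hμ : ∀ y, 0 ≤ μ y)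
    (hR : ∀ s t y, s ≠ t → |discDeriv t (condProb μ s) y| ≤ R s t)
    (hRsum : ∀ t, ∑ s ∈ univ.erase t, R s t ≤ θ) {f : (S → Bool) → ℝ} {M : ℝ}
    (hf : ∀ t y, |discDeriv t f y| ≤ M) (t : S) (y : S → Bool) :
    |discDeriv t (glauberSum μ f) y| ≤ (Fintype.card S - 1 + θ) * M := by
  have hM : 0 ≤ M := (abs_nonneg _).trans (hf t y)
  calc |discDeriv t (glauberSum μ f) y|
      = |∑ s ∈ univ.erase t, discDeriv t (glauber μ s f) y| := by
        rw [← add_zero (∑ s ∈ univ.erase t, _), ← discDeriv_glauber_self μ t f y,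
          Finset.sum_erase_add _ _ (mem_univ t), ← discDeriv_sum]
        rfl
    _ ≤ ∑ s ∈ univ.erase t, (M + R s t * M) :=
        (Finset.abs_sum_le_sum_abs _ _).trans <| Finset.sum_le_sum fun s hs =>
          abs_discDeriv_glauber_le hμ (ne_of_mem_erase hs) hf (hR s t y (ne_of_mem_erase hs))
    _ = (Fintype.card S - 1) * M + (∑ s ∈ univ.erase t, R s t) * M := by
        rw [Finset.sum_add_distrib, Finset.sum_const, nsmul_eq_mul, ← Finset.sum_mul,
          Finset.cast_card_erase_of_mem (mem_univ t), Finset.card_univ]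
    _ ≤ (Fintype.card S - 1 + θ) * M := by
        rw [add_mul]
        gcongr
        exact hRsum t

theorem wMean_mul_glauberSum_le [Nonempty S] (hμ : ∀ y, 0 < μ y) (h1 : ∑ y, μ y = 1)
    (hR : ∀ s t y, s ≠ t → |discDeriv t (condProb μ s) y| ≤ R s t)
    (hRsum : ∀ t, ∑ s ∈ univ.erase t, R s t ≤ θ) {f : (S → Bool) → ℝ} (hf : wMean μ f = 0) :
    wMean μ (fun y => f y * glauberSum μ f y) ≤
      (Fintype.card S - 1 + θ) * wMean μ (fun y => f y ^ 2) := by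
  have hμ0 : ∀ y, 0 ≤ μ y := fun y => (hμ y).le
  have hρ : (0 : ℝ) ≤ Fintype.card S - 1 + θ := by
    obtain ⟨t⟩ := ‹Nonempty S›
    have hcard : (1 : ℝ) ≤ Fintype.card S := Nat.one_le_cast.2 (Fintype.card_pos_iff.2 ⟨t⟩)
    have hθ : 0 ≤ θ := (hRsum t).trans' <| Finset.sum_nonneg fun s hs =>
      (abs_nonneg _).trans (hR s t (fun _ => true) (ne_of_mem_erase hs))
    linarith
  obtain ⟨M, hM⟩ : ∃ M, ∀ t y, |discDeriv t f y| ≤ M := by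
    obtain ⟨M, hM⟩ := (Set.finite_range fun x : S × (S → Bool) => |discDeriv x.1 f x.2|).bddAbove
    exact ⟨M, fun t y => hM ⟨(t, y), rfl⟩⟩
  set ρ : ℝ := Fintype.card S - 1 + θ
  have hiter (k : ℕ) : wMean μ ((glauberSum μ)^[k] f) = 0 ∧
      ∀ t y, |discDeriv t ((glauberSum μ)^[k] f) y| ≤ ρ ^ k * M := by
    induction k with
    | zero => simpa using ⟨hf, hM⟩
    | succ k ih =>
      rw [Function.iterate_succ_apply', wMean_glauberSum hμ, ih.1, mul_zero, pow_succ', mul_assoc]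
      exact ⟨rfl, abs_discDeriv_glauberSum_le hμ0 hR hRsum ih.2⟩
  refine wMean_mul_apply_le hμ0 (wMean_glauberSum_mul hμ) hρ
    (C := (Fintype.card S * M) ^ 2) fun k => wMean_le_of_le hμ0 h1 fun y => ?_
  have hsup : |(glauberSum μ)^[k] f y| ≤ Fintype.card S * (ρ ^ k * M) := by
    rw [← abs_neg, ← zero_sub, ← (hiter k).1]
    exact abs_wMean_sub_le hμ0 h1 fun z => abs_sub_le_card_mul (hiter k).2 y z
  calc (glauberSum μ)^[k] f y ^ 2 ≤ (Fintype.card S * (ρ ^ k * M)) ^ 2 :=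
        sq_le_sq' (neg_le_of_abs_le hsup) (le_of_abs_le hsup)
    _ = (Fintype.card S * M) ^ 2 * (ρ ^ 2) ^ k := by rw [pow_right_comm]; ring

theorem poincare_of_dobrushin (hμ : ∀ y, 0 < μ y) (h1 : ∑ y, μ y = 1)
    (hR : ∀ s t y, s ≠ t → |discDeriv t (condProb μ s) y| ≤ R s t)
    (hRsum : ∀ t, ∑ s ∈ univ.erase t, R s t ≤ θ) (f : (S → Bool) → ℝ) :
    (1 - θ) * wVar μ f ≤ ∑ s, wMean μ (fun y => discDeriv s f y ^ 2) := by
  rcases isEmpty_or_nonempty S with hS | hS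
  · obtain ⟨c, rfl⟩ : ∃ c, f = fun _ => c :=
      ⟨f default, funext fun y => congrArg f (Subsingleton.elim _ _)⟩
    simp [wVar, wMean_const h1]
  set g : (S → Bool) → ℝ := fun y => f y - wMean μ f with hg
  have hvar : wVar μ f = wMean μ (fun y => g y ^ 2) := rfl
  have hg0 : wMean μ g = 0 := by rw [hg, wMean_sub, wMean_const h1, sub_self]
  calc (1 - θ) * wVar μ f
      = Fintype.card S * wMean μ (fun y => g y ^ 2) -
          (Fintype.card S - 1 + θ) * wMean μ (fun y => g y ^ 2) := by rw [hvar]; ring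
    _ ≤ Fintype.card S * wMean μ (fun y => g y ^ 2) -
          wMean μ (fun y => g y * glauberSum μ g y) :=
        sub_le_sub_left (wMean_mul_glauberSum_le hμ h1 hR hRsum hg0) _
    _ = ∑ s, (wMean μ (fun y => g y ^ 2) - wMean μ (fun y => g y * glauber μ s g y)) := by
        simp only [glauberSum, Finset.mul_sum, wMean_sum, Finset.sum_sub_distrib,
          Finset.sum_const, nsmul_eq_mul, Finset.card_univ]
    _ ≤ ∑ s, wMean μ (fun y => discDeriv s g y ^ 2) :=
        Finset.sum_le_sum fun s _ => wMean_sq_sub_mul_glauber_le hμ s g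
    _ = ∑ s, wMean μ (fun y => discDeriv s f y ^ 2) := by simp only [hg, discDeriv_sub_const]

end Dobrushin

end SpinSystem

theorem abs_sigmoid_sub_le (x y : ℝ) : |Real.sigmoid x - Real.sigmoid y| ≤ |x - y| / 4 := by
  have hderiv : ∀ z ∈ Set.univ, ‖deriv Real.sigmoid z‖ ≤ 1 / 4 := fun z _ => by
    rw [deriv_sigmoid, Real.norm_eq_abs, abs_of_nonneg
      (mul_nonneg (Real.sigmoid_nonneg z) (sub_nonneg.2 (Real.sigmoid_le_one z)))]
    nlinarith [sq_nonneg (Real.sigmoid z - 1 / 2)]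
  have := convex_univ.norm_image_sub_le_of_norm_deriv_le
    (fun z _ => differentiable_sigmoid z) hderiv (Set.mem_univ y) (Set.mem_univ x)
  rwa [Real.norm_eq_abs, Real.norm_eq_abs, one_div_mul_eq_div] at this

theorem abs_prod_sub_prod_le {ι : Type*} {a b : ι → ℝ} (T : Finset ι)
    (ha : ∀ i ∈ T, |a i| ≤ 1) (hb : ∀ i ∈ T, |b i| ≤ 1) :
    |∏ i ∈ T, a i - ∏ i ∈ T, b i| ≤ ∑ i ∈ T, |a i - b i| := by
  classical
  induction T using Finset.induction_on with
  | empty => simp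
  | insert i T hi ih =>
    rw [Finset.forall_mem_insert] at ha hb
    rw [Finset.prod_insert hi, Finset.prod_insert hi, Finset.sum_insert hi]
    have hprod : |∏ j ∈ T, b j| ≤ 1 := by
      rw [Finset.abs_prod]
      exact Finset.prod_le_one (fun j _ => abs_nonneg _) hb.2
    calc |a i * ∏ j ∈ T, a j - b i * ∏ j ∈ T, b j|
        = |(a i - b i) * ∏ j ∈ T, b j + a i * (∏ j ∈ T, a j - ∏ j ∈ T, b j)| := by ring_nf
      _ ≤ |a i - b i| * |∏ j ∈ T, b j| + |a i| * |∏ j ∈ T, a j - ∏ j ∈ T, b j| := by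
        simpa only [abs_mul] using
          abs_add_le ((a i - b i) * ∏ j ∈ T, b j) (a i * (∏ j ∈ T, a j - ∏ j ∈ T, b j))
      _ ≤ |a i - b i| + ∑ j ∈ T, |a j - b j| :=
        add_le_add (mul_le_of_le_one_right (abs_nonneg _) hprod)
          ((mul_le_of_le_one_left (abs_nonneg _) ha.1).trans (ih ha.2 hb.2))

/-! ### Counts of set families -/

section Monomials

variable {S : Type*}

/-- The indicator that all spins in `A` are `true`. -/
def allTrue (A : Finset S) (y : S → Bool) : ℝ := if ∀ s ∈ A, y s = true then 1 else 0

theorem allTrue_empty : allTrue (∅ : Finset S) = fun _ => 1 := by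
  ext y
  simp [allTrue]

theorem abs_allTrue_le_one (A : Finset S) (y : S → Bool) : |allTrue A y| ≤ 1 := by
  unfold allTrue
  split_ifs <;> norm_num

variable [DecidableEq S]

theorem allTrue_update_true (A : Finset S) (s : S) (y : S → Bool) :
    allTrue A (Function.update y s true) = allTrue (A.erase s) y := by
  unfold allTrue
  congr 1
  grind [Function.update_apply]

theorem allTrue_update_of_notMem {A : Finset S} {s : S} (hs : s ∉ A) (y : S → Bool) (b : Bool) :
    allTrue A (Function.update y s b) = allTrue A y := by
  unfold allTrue
  congr 1
  grind [Function.update_apply]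

theorem allTrue_update_false {A : Finset S} {s : S} (hs : s ∈ A) (y : S → Bool) :
    allTrue A (Function.update y s false) = 0 :=
  if_neg fun h => by simpa using h s hs

theorem discDeriv_allTrue (A : Finset S) (s : S) (y : S → Bool) :
    discDeriv s (allTrue A) y = if s ∈ A then allTrue (A.erase s) y else 0 := by
  unfold discDeriv
  split_ifs with h
  · rw [allTrue_update_true, allTrue_update_false h, sub_zero]
  · rw [allTrue_update_of_notMem h, allTrue_update_of_notMem h, sub_self]

theorem abs_discDeriv_allTrue_le (A : Finset S) (s : S) (y : S → Bool) :
    |discDeriv s (allTrue A) y| ≤ if s ∈ A then 1 else 0 := by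
  rw [discDeriv_allTrue]
  split_ifs
  · exact abs_allTrue_le_one _ _
  · simp

end Monomials

section Families

variable {S : Type*} [DecidableEq S] {ι : Type*} [Fintype ι]

/-- The number of members of the family `A` all of whose spins are `true`. -/
def familyCount (A : ι → Finset S) (y : S → Bool) : ℝ := ∑ i, allTrue (A i) y

/-- The number of members of the family `A` containing `s`. -/
def familyDegree (A : ι → Finset S) (s : S) : ℕ := #{i | s ∈ A i}

/-- The number of members of the family `A` containing both `s` and `t`. -/
def familyCodegree (A : ι → Finset S) (s t : S) : ℕ := #{i | s ∈ A i ∧ t ∈ A i}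

theorem familyCodegree_comm (A : ι → Finset S) (s t : S) :
    familyCodegree A s t = familyCodegree A t s := by
  simp only [familyCodegree, and_comm]

theorem discDeriv_familyCount (A : ι → Finset S) (s : S) :
    discDeriv s (familyCount A) = fun y => ∑ i with s ∈ A i, allTrue ((A i).erase s) y := by
  ext y
  unfold familyCount
  rw [discDeriv_sum, Finset.sum_filter]
  exact Finset.sum_congr rfl fun i _ => discDeriv_allTrue _ _ _

theorem abs_discDeriv_discDeriv_familyCount_le (A : ι → Finset S) {s t : S} (hst : s ≠ t)
    (y : S → Bool) : |discDeriv t (discDeriv s (familyCount A)) y| ≤ familyCodegree A s t := by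
  rw [discDeriv_familyCount, discDeriv_sum]
  calc |∑ i with s ∈ A i, discDeriv t (allTrue ((A i).erase s)) y|
      ≤ ∑ i with s ∈ A i, if t ∈ (A i).erase s then (1 : ℝ) else 0 :=
        (Finset.abs_sum_le_sum_abs _ _).trans <|
          Finset.sum_le_sum fun i _ => abs_discDeriv_allTrue_le _ _ _
    _ = familyCodegree A s t := by
        rw [Finset.sum_boole, familyCodegree, Finset.filter_filter]
        simp [hst.symm]

theorem sum_familyCodegree [Fintype S] {A : ι → Finset S} {e : ℕ} (hA : ∀ i, #(A i) = e)
    (s : S) :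
    ∑ t ∈ univ.erase s, (familyCodegree A s t : ℝ) = ((e - 1 : ℕ) : ℝ) * familyDegree A s := by
  have hcard : ∀ i ∈ ({i | s ∈ A i} : Finset ι), #{t ∈ univ.erase s | t ∈ A i} = e - 1 := by
    intro i hi
    rw [← hA i, ← Finset.card_erase_of_mem (Finset.mem_filter.1 hi).2]
    congr 1
    ext t
    simp [and_comm]
  have hcount : ∑ t ∈ univ.erase s, familyCodegree A s t = (e - 1) * familyDegree A s := by
    simp only [familyCodegree, ← Finset.filter_filter]
    refine (Finset.sum_card_bipartiteAbove_eq_sum_card_bipartiteBelow fun t i => t ∈ A i).trans ?_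
    exact (Finset.sum_const_nat hcard).trans (mul_comm _ _)
  exact_mod_cast hcount

/-- A family of `e`-element sets in which every site has degree `2 e r`, up to a relative error
`O(1 / ν)`, and in which the codegrees are smaller by a factor `ν`. The factor `2` accounts for
the two orientations in which the image of an edge of a graph can be an edge of `G_y`. -/
structure IsUniformFamily (A : ι → Finset S) (e : ℕ) (r ν D : ℝ) : Prop where
  scale_pos : 0 < r
  err_nonneg : 0 ≤ D
  card_eq : ∀ i, #(A i) = e
  degree_le : ∀ s, (familyDegree A s : ℝ) ≤ 2 * e * r
  le_degree : ∀ s, 2 * e * r - D * r / ν ≤ familyDegree A s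
  codegree_le : ∀ s t, s ≠ t → (familyCodegree A s t : ℝ) ≤ D * r / ν

theorem IsUniformFamily.sum_sq_discDeriv_discDeriv_le [Fintype S] {A : ι → Finset S} {e : ℕ}
    {r ν D : ℝ} (hA : IsUniformFamily A e r ν D) (hν : 0 < ν) (s : S) (y : S → Bool) :
    ∑ t, discDeriv t (discDeriv s (familyCount A)) y ^ 2 ≤
      D * r / ν * ((e - 1 : ℕ) * (2 * e * r)) := by
  have hr := hA.scale_pos
  have hD := hA.err_nonneg
  have hterm : ∀ t ∈ univ.erase s, discDeriv t (discDeriv s (familyCount A)) y ^ 2 ≤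
      D * r / ν * familyCodegree A s t := by
    intro t ht
    have hst : s ≠ t := (Finset.ne_of_mem_erase ht).symm
    rw [← sq_abs, sq]
    exact mul_le_mul
      ((abs_discDeriv_discDeriv_familyCount_le A hst y).trans (hA.codegree_le s t hst))
      (abs_discDeriv_discDeriv_familyCount_le A hst y) (abs_nonneg _) (by positivity)
  calc ∑ t, discDeriv t (discDeriv s (familyCount A)) y ^ 2
      = ∑ t ∈ univ.erase s, discDeriv t (discDeriv s (familyCount A)) y ^ 2 := by
        rw [← Finset.add_sum_erase _ _ (mem_univ s), discDeriv_discDeriv_self]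
        simp
    _ ≤ D * r / ν * ∑ t ∈ univ.erase s, (familyCodegree A s t : ℝ) := by
        rw [Finset.mul_sum]
        exact Finset.sum_le_sum hterm
    _ ≤ D * r / ν * ((e - 1 : ℕ) * (2 * e * r)) := by
        rw [sum_familyCodegree hA.card_eq]
        gcongr
        exact hA.degree_le s

end Families

/-! ### Mean-field approximation -/

section MeanField

variable {S : Type*} [DecidableEq S] [Fintype S] {μ : (S → Bool) → ℝ}

/-- The probability that the spin at `s` is `true`, as the mean of its conditional
probability. -/
def spinProb (μ : (S → Bool) → ℝ) (s : S) : ℝ := wMean μ (condProb μ s)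

theorem spinProb_mem_Icc (hμ : ∀ y, 0 ≤ μ y) (h1 : ∑ y, μ y = 1) (s : S) :
    spinProb μ s ∈ Set.Icc 0 1 :=
  ⟨wMean_nonneg hμ fun y => (condProb_mem_Icc hμ s y).1,
    wMean_le_of_le hμ h1 fun y => (condProb_mem_Icc hμ s y).2⟩

theorem wMean_allTrue_insert (hμ : ∀ y, 0 < μ y) {T : Finset S} {s : S} (hs : s ∉ T) :
    wMean μ (allTrue (insert s T)) = wMean μ (fun y => condProb μ s y * allTrue T y) := by
  rw [← wMean_glauber hμ s]
  congr 1
  ext y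
  rw [glauber, allTrue_update_true, Finset.erase_insert hs,
    allTrue_update_false (Finset.mem_insert_self _ _), mul_zero, add_zero]

variable {δ Δ p : ℝ}

theorem abs_wMean_allTrue_sub_prod_le (hμ : ∀ y, 0 < μ y) (h1 : ∑ y, μ y = 1)
    (hδ : ∀ s, wMean μ (fun y => |condProb μ s y - spinProb μ s|) ≤ δ) (T : Finset S) :
    |wMean μ (allTrue T) - ∏ s ∈ T, spinProb μ s| ≤ #T * δ := by
  have hμ0 : ∀ y, 0 ≤ μ y := fun y => (hμ y).le
  induction T using Finset.induction_on with
  | empty => simp [allTrue_empty, wMean_const h1]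
  | insert s T hs ih =>
    rw [Finset.prod_insert hs, Finset.card_insert_of_notMem hs, wMean_allTrue_insert hμ hs]
    set q := spinProb μ s
    obtain ⟨hq0, hq1⟩ : q ∈ Set.Icc 0 1 := spinProb_mem_Icc hμ0 h1 s
    have hsplit : wMean μ (fun y => condProb μ s y * allTrue T y) -
        q * ∏ s ∈ T, spinProb μ s =
        wMean μ (fun y => (condProb μ s y - q) * allTrue T y) +
        q * (wMean μ (allTrue T) - ∏ s ∈ T, spinProb μ s) := by
      simp only [sub_mul (condProb μ s _)]
      rw [wMean_sub, wMean_const_mul]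
      ring
    have hcov : |wMean μ (fun y => (condProb μ s y - q) * allTrue T y)| ≤ δ := by
      refine ((abs_wMean_le hμ0 _).trans (wMean_mono hμ0 fun y => ?_)).trans (hδ s)
      rw [abs_mul]
      exact mul_le_of_le_one_right (abs_nonneg _) (abs_allTrue_le_one _ _)
    have hrest : |q * (wMean μ (allTrue T) - ∏ s ∈ T, spinProb μ s)| ≤ #T * δ := by
      rw [abs_mul, abs_of_nonneg hq0]
      exact (mul_le_of_le_one_left (abs_nonneg _) hq1).trans ih
    rw [hsplit]
    push_cast
    linarith [abs_add_le (wMean μ (fun y => (condProb μ s y - q) * allTrue T y))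
      (q * (wMean μ (allTrue T) - ∏ s ∈ T, spinProb μ s))]

theorem abs_wMean_allTrue_sub_pow_le (hμ : ∀ y, 0 < μ y) (h1 : ∑ y, μ y = 1)
    (hδ : ∀ s, wMean μ (fun y => |condProb μ s y - spinProb μ s|) ≤ δ) (hp : p ∈ Set.Icc 0 1)
    (hΔ : ∀ s, |spinProb μ s - p| ≤ Δ) (T : Finset S) :
    |wMean μ (allTrue T) - p ^ #T| ≤ #T * (δ + Δ) := by
  have hprod : |∏ s ∈ T, spinProb μ s - p ^ #T| ≤ #T * Δ := by
    have hq (s : S) : |spinProb μ s| ≤ 1 := by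
      obtain ⟨hq0, hq1⟩ := spinProb_mem_Icc (fun y => (hμ y).le) h1 s
      rwa [abs_of_nonneg hq0]
    rw [← Finset.prod_const]
    refine (abs_prod_sub_prod_le T (fun s _ => hq s)
      fun s _ => (abs_of_nonneg hp.1).trans_le hp.2).trans ?_
    simpa using Finset.sum_le_card_nsmul T _ Δ fun s _ => hΔ s
  rw [mul_add]
  exact (abs_sub_le _ _ _).trans (add_le_add (abs_wMean_allTrue_sub_prod_le hμ h1 hδ T) hprod)

theorem IsUniformFamily.abs_wMean_discDeriv_sub_le {κ : Type*} [Fintype κ] {B : κ → Finset S}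
    {b : ℕ} {ρ ν E : ℝ} (hB : IsUniformFamily B b ρ ν E) (hμ : ∀ y, 0 < μ y)
    (h1 : ∑ y, μ y = 1) (hδ : ∀ s, wMean μ (fun y => |condProb μ s y - spinProb μ s|) ≤ δ)
    (hp : p ∈ Set.Icc 0 1) (hΔ : ∀ s, |spinProb μ s - p| ≤ Δ) (s : S) :
    |wMean μ (discDeriv s (familyCount B)) - 2 * b * ρ * p ^ (b - 1)| ≤
      2 * b * ρ * ((b - 1 : ℕ) * (δ + Δ)) + E * ρ / ν := by
  have hδ0 : 0 ≤ δ := (hδ s).trans' (wMean_nonneg (fun y => (hμ y).le) fun y => abs_nonneg _)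
  have hΔ0 : 0 ≤ Δ := (abs_nonneg _).trans (hΔ s)
  have hterm : ∀ i ∈ ({i | s ∈ B i} : Finset κ),
      |wMean μ (allTrue ((B i).erase s)) - p ^ (b - 1)| ≤ (b - 1 : ℕ) * (δ + Δ) := by
    intro i hi
    have hcard : #((B i).erase s) = b - 1 := by
      rw [Finset.card_erase_of_mem (Finset.mem_filter.1 hi).2, hB.card_eq]
    rw [← hcard]
    exact abs_wMean_allTrue_sub_pow_le hμ h1 hδ hp hΔ _
  have hmean : |wMean μ (discDeriv s (familyCount B)) - familyDegree B s * p ^ (b - 1)| ≤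
      2 * b * ρ * ((b - 1 : ℕ) * (δ + Δ)) := by
    calc |wMean μ (discDeriv s (familyCount B)) - familyDegree B s * p ^ (b - 1)|
        = |∑ i with s ∈ B i, (wMean μ (allTrue ((B i).erase s)) - p ^ (b - 1))| := by
          rw [discDeriv_familyCount, wMean_sum, Finset.sum_sub_distrib, Finset.sum_const,
            nsmul_eq_mul, familyDegree]
      _ ≤ familyDegree B s * ((b - 1 : ℕ) * (δ + Δ)) := by
          rw [familyDegree, ← nsmul_eq_mul]
          exact (Finset.abs_sum_le_sum_abs _ _).trans (Finset.sum_le_card_nsmul _ _ _ hterm)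
      _ ≤ 2 * b * ρ * ((b - 1 : ℕ) * (δ + Δ)) :=
          mul_le_mul_of_nonneg_right (hB.degree_le s) (by positivity)
  have hdegree : |familyDegree B s * p ^ (b - 1) - 2 * b * ρ * p ^ (b - 1)| ≤ E * ρ / ν := by
    rw [← sub_mul, abs_mul, abs_of_nonneg (pow_nonneg hp.1 _), abs_sub_comm,
      abs_of_nonneg (sub_nonneg.2 (hB.degree_le s))]
    exact (mul_le_of_le_one_right (sub_nonneg.2 (hB.degree_le s))
      (pow_le_one₀ hp.1 hp.2)).trans (by linarith [hB.le_degree s])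
  exact (abs_sub_le _ _ _).trans (add_le_add hmean hdegree)

end MeanField

/-! ### Gibbs measures in Dobrushin's uniqueness regime -/

section Gibbs

variable {S : Type*} [DecidableEq S] [Fintype S] {J : Type*} [Fintype J] {ι : J → Type*}
  [∀ j, Fintype (ι j)]

/-- A Gibbs measure whose energy is the combination of the counts of the uniform families `A j`
with coefficients `β j / r j`, in Dobrushin's uniqueness regime: `θ` bounds the total influence of
the other spins on one spin, `ν` measures the size of the system. -/
structure IsDobrushinGibbs (μ : (S → Bool) → ℝ) (β : J → ℝ) (A : ∀ j, ι j → Finset S)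
    (e : J → ℕ) (r : J → ℝ) (ν : ℝ) (D : J → ℝ) (θ : ℝ) : Prop where
  pos : ∀ y, 0 < μ y
  sum_eq_one : ∑ y, μ y = 1
  condProb_eq : ∀ s y, condProb μ s y =
    Real.sigmoid (∑ j, β j / r j * discDeriv s (familyCount (A j)) y)
  family : ∀ j, IsUniformFamily (A j) (e j) (r j) ν (D j)
  one_le : 1 ≤ ν
  lt_one : θ < 1
  influence_le : ∑ j, |β j| * (e j * (e j - 1 : ℕ)) ≤ 2 * θ

/-- The bound on the variance of a discrete derivative of a family count, in units of the squared
scale of the family divided by the size `ν`. -/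
def derivVar (e : ℕ) (D θ : ℝ) : ℝ := 2 * e * (e - 1 : ℕ) * D / (1 - θ)

/-- The rate of concentration of the conditional probabilities, in units of `1 / √ν`. -/
def condRate (β : J → ℝ) (e : J → ℕ) (D : J → ℝ) (θ : ℝ) : ℝ :=
  (∑ j, |β j| * √(derivVar (e j) (D j) θ)) / 4

/-- The rate of convergence of the spin probabilities to the mean-field fixed point, in units of
`1 / √ν`. -/
def densityRate (β : J → ℝ) (e : J → ℕ) (D : J → ℝ) (θ : ℝ) : ℝ :=
  ((1 + 2 * θ) * condRate β e D θ + (∑ j, |β j| * D j) / 4) / (1 - θ)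

namespace IsDobrushinGibbs

variable {μ : (S → Bool) → ℝ} {β : J → ℝ} {A : ∀ j, ι j → Finset S}
    {e : J → ℕ} {r : J → ℝ} {ν : ℝ} {D : J → ℝ} {θ : ℝ}

theorem nonneg (h : IsDobrushinGibbs μ β A e r ν D θ) (y : S → Bool) : 0 ≤ μ y := (h.pos y).le

theorem size_pos (h : IsDobrushinGibbs μ β A e r ν D θ) : 0 < ν := one_pos.trans_le h.one_le

theorem abs_sigmoid_sub_sigmoid_le (h : IsDobrushinGibbs μ β A e r ν D θ) (x z : J → ℝ) :
    |Real.sigmoid (∑ j, β j / r j * x j) - Real.sigmoid (∑ j, β j / r j * z j)| ≤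
      (∑ j, |β j| / r j * |x j - z j|) / 4 := by
  refine (abs_sigmoid_sub_le _ _).trans ?_
  rw [← Finset.sum_sub_distrib]
  gcongr
  refine (Finset.abs_sum_le_sum_abs _ _).trans_eq (Finset.sum_congr rfl fun j _ => ?_)
  rw [← mul_sub, abs_mul, abs_div, abs_of_pos (h.family j).scale_pos]

theorem abs_discDeriv_condProb_le (h : IsDobrushinGibbs μ β A e r ν D θ) {s t : S}
    (hst : s ≠ t) (y : S → Bool) : |discDeriv t (condProb μ s) y| ≤
      (∑ j, |β j| / r j * familyCodegree (A j) s t) / 4 := by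
  rw [discDeriv, h.condProb_eq, h.condProb_eq]
  refine (h.abs_sigmoid_sub_sigmoid_le _ _).trans ?_
  gcongr with j
  · exact div_nonneg (abs_nonneg _) (h.family j).scale_pos.le
  · exact abs_discDeriv_discDeriv_familyCount_le (A j) hst y

theorem sum_influence_le (h : IsDobrushinGibbs μ β A e r ν D θ) (t : S) :
    ∑ s ∈ univ.erase t, (∑ j, |β j| / r j * familyCodegree (A j) s t) / 4 ≤ θ := by
  rw [← Finset.sum_div, Finset.sum_comm]
  have hterm (j : J) : ∑ s ∈ univ.erase t, |β j| / r j * (familyCodegree (A j) s t : ℝ) ≤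
      2 * (|β j| * (e j * (e j - 1 : ℕ))) := by
    have hr := (h.family j).scale_pos
    simp only [← Finset.mul_sum, familyCodegree_comm (A j) _ t]
    rw [sum_familyCodegree (h.family j).card_eq]
    calc |β j| / r j * ((e j - 1 : ℕ) * familyDegree (A j) t)
        ≤ |β j| / r j * ((e j - 1 : ℕ) * (2 * e j * r j)) := by
          gcongr
          exact (h.family j).degree_le t
      _ = 2 * (|β j| * (e j * (e j - 1 : ℕ))) := by field_simp
  have := Finset.sum_le_sum fun j (_ : j ∈ univ) => hterm j
  rw [← Finset.mul_sum] at this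
  linarith [h.influence_le]

theorem wVar_le (h : IsDobrushinGibbs μ β A e r ν D θ) (f : (S → Bool) → ℝ) :
    wVar μ f ≤ (∑ s, wMean μ (fun y => discDeriv s f y ^ 2)) / (1 - θ) := by
  rw [le_div_iff₀' (sub_pos.2 h.lt_one)]
  exact poincare_of_dobrushin h.pos h.sum_eq_one
    (fun s t y hst => h.abs_discDeriv_condProb_le hst y) h.sum_influence_le f

variable {κ : Type*} [Fintype κ] {B : κ → Finset S} {b : ℕ} {ρ E : ℝ}

theorem derivVar_nonneg (h : IsDobrushinGibbs μ β A e r ν D θ) (b : ℕ) (hE : 0 ≤ E) :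
    0 ≤ derivVar b E θ :=
  div_nonneg (by positivity) (sub_pos.2 h.lt_one).le

theorem wVar_discDeriv_le (h : IsDobrushinGibbs μ β A e r ν D θ)
    (hB : IsUniformFamily B b ρ ν E) (s : S) :
    wVar μ (discDeriv s (familyCount B)) ≤ derivVar b E θ * (ρ ^ 2 / ν) := by
  have hθ := sub_pos.2 h.lt_one
  calc wVar μ (discDeriv s (familyCount B))
      ≤ (∑ t, wMean μ (fun y => discDeriv t (discDeriv s (familyCount B)) y ^ 2)) / (1 - θ) :=
        h.wVar_le _
    _ ≤ E * ρ / ν * ((b - 1 : ℕ) * (2 * b * ρ)) / (1 - θ) := by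
        rw [← wMean_sum]
        gcongr
        exact wMean_le_of_le h.nonneg h.sum_eq_one (hB.sum_sq_discDeriv_discDeriv_le h.size_pos s)
    _ = derivVar b E θ * (ρ ^ 2 / ν) := by unfold derivVar; ring

theorem wMean_abs_discDeriv_sub_le (h : IsDobrushinGibbs μ β A e r ν D θ)
    (hB : IsUniformFamily B b ρ ν E) (s : S) :
    wMean μ (fun y => |discDeriv s (familyCount B) y - wMean μ (discDeriv s (familyCount B))|) ≤
      √(derivVar b E θ) * (ρ / √ν) := by
  refine (wMean_abs_sub_le_sqrt_wVar h.nonneg h.sum_eq_one _).trans ?_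
  refine (Real.sqrt_le_sqrt (h.wVar_discDeriv_le hB s)).trans_eq ?_
  rw [Real.sqrt_mul (h.derivVar_nonneg b hB.err_nonneg), Real.sqrt_div (sq_nonneg _),
    Real.sqrt_sq hB.scale_pos.le]

theorem wMean_abs_condProb_sub_sigmoid_le (h : IsDobrushinGibbs μ β A e r ν D θ) (s : S) :
    wMean μ (fun y => |condProb μ s y -
      Real.sigmoid (∑ j, β j / r j * wMean μ (discDeriv s (familyCount (A j))))|) ≤
      condRate β e D θ / √ν := by
  set m := fun j => wMean μ (discDeriv s (familyCount (A j)))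
  have hterm (j : J) :
      wMean μ (fun y => |β j| / r j / 4 * |discDeriv s (familyCount (A j)) y - m j|) ≤
        |β j| * √(derivVar (e j) (D j) θ) / 4 / √ν := by
    have hr := (h.family j).scale_pos
    rw [wMean_const_mul]
    calc _ ≤ |β j| / r j / 4 * (√(derivVar (e j) (D j) θ) * (r j / √ν)) := by
          gcongr
          exact h.wMean_abs_discDeriv_sub_le (h.family j) s
      _ = |β j| * √(derivVar (e j) (D j) θ) / 4 / √ν := by field_simp
  calc _ ≤ wMean μ (fun y => ∑ j, |β j| / r j / 4 *
            |discDeriv s (familyCount (A j)) y - m j|) :=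
        wMean_mono h.nonneg fun y => by
          rw [h.condProb_eq]
          refine (h.abs_sigmoid_sub_sigmoid_le _ m).trans_eq ?_
          simp only [Finset.sum_div, div_mul_eq_mul_div]
    _ ≤ ∑ j, |β j| * √(derivVar (e j) (D j) θ) / 4 / √ν := by
        rw [wMean_sum]
        exact Finset.sum_le_sum fun j _ => hterm j
    _ = condRate β e D θ / √ν := by simp only [condRate, Finset.sum_div]

theorem abs_spinProb_sub_sigmoid_le (h : IsDobrushinGibbs μ β A e r ν D θ) (s : S) :
    |spinProb μ s -
      Real.sigmoid (∑ j, β j / r j * wMean μ (discDeriv s (familyCount (A j))))| ≤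
      condRate β e D θ / √ν := by
  refine ((abs_wMean_le h.nonneg _).trans_eq' ?_).trans (h.wMean_abs_condProb_sub_sigmoid_le s)
  rw [wMean_sub, wMean_const h.sum_eq_one, spinProb]

theorem wMean_abs_condProb_sub_spinProb_le (h : IsDobrushinGibbs μ β A e r ν D θ) (s : S) :
    wMean μ (fun y => |condProb μ s y - spinProb μ s|) ≤ 2 * condRate β e D θ / √ν := by
  set c := Real.sigmoid (∑ j, β j / r j * wMean μ (discDeriv s (familyCount (A j))))
  have htri : wMean μ (fun y => |condProb μ s y - spinProb μ s|) ≤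
      wMean μ (fun y => |condProb μ s y - c| - -|spinProb μ s - c|) := by
    refine wMean_mono h.nonneg fun y => ?_
    rw [sub_neg_eq_add, abs_sub_comm (spinProb μ s)]
    exact abs_sub_le _ _ _
  rw [wMean_sub, wMean_const h.sum_eq_one] at htri
  rw [two_mul, add_div]
  linarith [h.wMean_abs_condProb_sub_sigmoid_le s, h.abs_spinProb_sub_sigmoid_le s]

theorem abs_wMean_discDeriv_sub_le (h : IsDobrushinGibbs μ β A e r ν D θ)
    (hB : IsUniformFamily B b ρ ν E) {p Δ : ℝ} (hp : p ∈ Set.Icc 0 1)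
    (hΔ : ∀ s, |spinProb μ s - p| ≤ Δ) (s : S) :
    |wMean μ (discDeriv s (familyCount B)) - 2 * b * ρ * p ^ (b - 1)| ≤
      ρ * (2 * (b * (b - 1 : ℕ)) * (2 * condRate β e D θ / √ν + Δ) + E / √ν) := by
  have hsqrt : √ν ≤ ν := Real.sqrt_le_iff.2 ⟨h.size_pos.le, le_self_pow₀ h.one_le two_ne_zero⟩
  have hEρ : E * ρ / ν ≤ E * ρ / √ν :=
    div_le_div_of_nonneg_left (mul_nonneg hB.err_nonneg hB.scale_pos.le)
      (Real.sqrt_pos.2 h.size_pos) hsqrt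
  refine (hB.abs_wMean_discDeriv_sub_le h.pos h.sum_eq_one
    h.wMean_abs_condProb_sub_spinProb_le hp hΔ s).trans ((add_le_add_right hEρ _).trans_eq ?_)
  ring

variable {p : ℝ}

theorem abs_sigmoid_sub_fixedPoint_le (h : IsDobrushinGibbs μ β A e r ν D θ)
    (hp : p ∈ Set.Icc 0 1) (hfix : Real.sigmoid (2 * ∑ j, β j * e j * p ^ (e j - 1)) = p)
    {Δ : ℝ} (hΔ : ∀ s, |spinProb μ s - p| ≤ Δ) (s : S) :
    |Real.sigmoid (∑ j, β j / r j * wMean μ (discDeriv s (familyCount (A j)))) - p| ≤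
      θ * (2 * condRate β e D θ / √ν + Δ) + (∑ j, |β j| * D j) / 4 / √ν := by
  have hε : 0 ≤ 2 * condRate β e D θ / √ν + Δ :=
    add_nonneg ((wMean_nonneg h.nonneg fun y => abs_nonneg _).trans
      (h.wMean_abs_condProb_sub_spinProb_le s)) ((abs_nonneg _).trans (hΔ s))
  set ε := 2 * condRate β e D θ / √ν + Δ
  have hrewrite : 2 * ∑ j, β j * e j * p ^ (e j - 1) =
      ∑ j, β j / r j * (2 * e j * r j * p ^ (e j - 1)) := by
    rw [Finset.mul_sum]
    refine Finset.sum_congr rfl fun j _ => ?_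
    field_simp [(h.family j).scale_pos.ne']
  have hterm (j : J) : |β j| / r j * |wMean μ (discDeriv s (familyCount (A j))) -
      2 * e j * r j * p ^ (e j - 1)| ≤
      2 * ε * (|β j| * (e j * (e j - 1 : ℕ))) + |β j| * D j / √ν := by
    have hr := (h.family j).scale_pos
    calc _ ≤ |β j| / r j * (r j * (2 * (e j * (e j - 1 : ℕ)) * ε + D j / √ν)) := by
          gcongr
          exact h.abs_wMean_discDeriv_sub_le (h.family j) hp hΔ s
      _ = _ := by field_simp
  have hsum := Finset.sum_le_sum fun j (_ : j ∈ univ) => hterm j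
  rw [Finset.sum_add_distrib, ← Finset.mul_sum, ← Finset.sum_div] at hsum
  have hlip := h.abs_sigmoid_sub_sigmoid_le
    (fun j => wMean μ (discDeriv s (familyCount (A j)))) fun j => 2 * e j * r j * p ^ (e j - 1)
  rw [← hrewrite, hfix] at hlip
  rw [div_right_comm]
  linarith [mul_le_mul_of_nonneg_left h.influence_le hε]

theorem abs_spinProb_sub_le (h : IsDobrushinGibbs μ β A e r ν D θ) (hp : p ∈ Set.Icc 0 1)
    (hfix : Real.sigmoid (2 * ∑ j, β j * e j * p ^ (e j - 1)) = p) (s : S) :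
    |spinProb μ s - p| ≤ densityRate β e D θ / √ν := by
  obtain ⟨t, -, ht⟩ := Finset.exists_max_image univ (fun s => |spinProb μ s - p|) ⟨s, mem_univ s⟩
  have hΔ : ∀ s, |spinProb μ s - p| ≤ |spinProb μ t - p| := fun s => ht s (mem_univ s)
  refine (hΔ s).trans ?_
  have hself : |spinProb μ t - p| ≤ condRate β e D θ / √ν +
      (θ * (2 * condRate β e D θ / √ν + |spinProb μ t - p|) + (∑ j, |β j| * D j) / 4 / √ν) :=
    (abs_sub_le _ _ _).trans (add_le_add (h.abs_spinProb_sub_sigmoid_le t)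
      (h.abs_sigmoid_sub_fixedPoint_le hp hfix hΔ t))
  rw [densityRate, div_right_comm, le_div_iff₀ (sub_pos.2 h.lt_one), add_div]
  linear_combination hself

theorem wVar_le_of_discDeriv_eq (h : IsDobrushinGibbs μ β A e r ν D θ)
    (hB : IsUniformFamily B b ρ ν E) (hp : p ∈ Set.Icc 0 1)
    (hfix : Real.sigmoid (2 * ∑ j, β j * e j * p ^ (e j - 1)) = p) {g : (S → Bool) → ℝ}
    (hg : ∀ s y, discDeriv s g y = discDeriv s (familyCount B) y - 2 * b * ρ * p ^ (b - 1)) :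
    wVar μ g ≤
      (derivVar b E θ + (2 * (b * (b - 1 : ℕ)) *
        (2 * condRate β e D θ + densityRate β e D θ) + E) ^ 2) / (1 - θ) *
        (Fintype.card S * ρ ^ 2 / ν) := by
  have hθ := sub_pos.2 h.lt_one
  set L := 2 * (b * (b - 1 : ℕ)) * (2 * condRate β e D θ + densityRate β e D θ) + E
  have hterm (s : S) : wMean μ (fun y => discDeriv s g y ^ 2) ≤
      (derivVar b E θ + L ^ 2) * (ρ ^ 2 / ν) := by
    have hbias : |wMean μ (discDeriv s (familyCount B)) - 2 * b * ρ * p ^ (b - 1)| ≤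
        ρ * L / √ν :=
      (h.abs_wMean_discDeriv_sub_le hB hp (h.abs_spinProb_sub_le hp hfix) s).trans_eq (by ring)
    calc wMean μ (fun y => discDeriv s g y ^ 2)
        = wVar μ (discDeriv s (familyCount B)) +
            (wMean μ (discDeriv s (familyCount B)) - 2 * b * ρ * p ^ (b - 1)) ^ 2 := by
          simp only [hg, wMean_sub_const_sq h.sum_eq_one]
      _ ≤ derivVar b E θ * (ρ ^ 2 / ν) + (ρ * L / √ν) ^ 2 :=
          add_le_add (h.wVar_discDeriv_le hB s)
            (sq_le_sq' (neg_le_of_abs_le hbias) (le_of_abs_le hbias))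
      _ = (derivVar b E θ + L ^ 2) * (ρ ^ 2 / ν) := by
          rw [div_pow, Real.sq_sqrt h.size_pos.le]; ring
  calc wVar μ g ≤ (∑ s, wMean μ (fun y => discDeriv s g y ^ 2)) / (1 - θ) := h.wVar_le g
    _ ≤ (Fintype.card S * ((derivVar b E θ + L ^ 2) * (ρ ^ 2 / ν))) / (1 - θ) := by
        gcongr
        simpa using Finset.sum_le_card_nsmul univ _ _ fun s _ => hterm s
    _ = _ := by ring

end IsDobrushinGibbs

end Gibbs

/-! ### Copies of a graph in the complete graph -/

section Embeddings

theorem card_compl_range {α β : Type*} [Fintype α] [Fintype β] (f : α ↪ β)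
    [Fintype ↥(Set.range f)ᶜ] :
    Fintype.card ↥(Set.range f)ᶜ = Fintype.card β - Fintype.card α := by
  classical
  rw [Fintype.card_compl_set, Set.card_range_of_injective f.injective]

variable {ι V W : Type*} [Fintype ι] [Fintype V] [Fintype W] [DecidableEq W]

theorem card_embedding_extending (f : ι ↪ V) (g : ι ↪ W) :
    #{φ : V ↪ W | ∀ i, φ (f i) = g i} =
      (Fintype.card W - Fintype.card ι).descFactorial (Fintype.card V - Fintype.card ι) := by
  classical
  let split : ι ⊕ ↥(Set.range f)ᶜ ≃ V :=
    ((Equiv.ofInjective f f.injective).sumCongr (Equiv.refl _)).trans (Equiv.Set.sumCompl _)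
  let restrict : (V ↪ W) ≃ Σ h : ι ↪ W, ↥(Set.range f)ᶜ ↪ ↥(Set.range h)ᶜ :=
    (Equiv.embeddingCongr split.symm (Equiv.refl W)).trans
      Equiv.sumEmbeddingEquivSigmaEmbeddingRestricted
  have hrestrict (φ : V ↪ W) : (restrict φ).1 = g ↔ ∀ i, φ (f i) = g i :=
    DFunLike.ext_iff
  rw [← Fintype.card_subtype, ← card_compl_range f, ← card_compl_range g,
    ← Fintype.card_embedding_eq]
  exact Fintype.card_congr <|
    (restrict.subtypeEquiv fun φ => (hrestrict φ).symm).trans (Equiv.sigmaSubtype g)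

theorem card_embedding_pair {a b : V} (hab : a ≠ b) {i j : W} (hij : i ≠ j) :
    #{φ : V ↪ W | φ a = i ∧ φ b = j} =
      (Fintype.card W - 2).descFactorial (Fintype.card V - 2) := by
  simpa [Fin.forall_fin_two, Function.Embedding.embFinTwo_apply_zero,
    Function.Embedding.embFinTwo_apply_one] using card_embedding_extending
    (Function.Embedding.embFinTwo hab) (Function.Embedding.embFinTwo hij)

theorem card_embedding_range_supset_le (g : ι ↪ W) :
    #{φ : V ↪ W | ∀ i, g i ∈ Set.range φ} ≤
      (Fintype.card V).descFactorial (Fintype.card ι) *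
        (Fintype.card W - Fintype.card ι).descFactorial (Fintype.card V - Fintype.card ι) := by
  classical
  have hcover : ({φ | ∀ i, g i ∈ Set.range φ} : Finset (V ↪ W)) ⊆
      univ.biUnion fun f : ι ↪ V => {φ | ∀ i, φ (f i) = g i} := by
    intro φ hφ
    choose f hf using (Finset.mem_filter.1 hφ).2
    have hinj : Function.Injective f := fun i j hij => g.injective (by rw [← hf, ← hf, hij])
    simpa using ⟨⟨f, hinj⟩, hf⟩
  refine (Finset.card_le_card hcover).trans (Finset.card_biUnion_le.trans_eq ?_)
  simp [card_embedding_extending, Fintype.card_embedding_eq]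

end Embeddings

theorem pow_mul_one_sub_le_descFactorial {n : ℕ} (hn : n ≠ 0) (k w : ℕ) :
    (n : ℝ) ^ w * (1 - w * (w + k) / n) ≤ (n - k).descFactorial w := by
  obtain rfl | hw := w.eq_zero_or_pos
  · simp
  have hn0 : (0 : ℝ) < n := by positivity
  obtain h | h := le_or_gt (w + k) n
  · have hbase : ((n - k + 1 - w : ℕ) : ℝ) = n * (1 + -((w + k - 1) / n)) := by
      rw [show n - k + 1 - w = n + 1 - (w + k) by omega, Nat.cast_sub (by omega)]
      push_cast
      field_simp
      ring
    have hle : ((w + k - 1 : ℝ)) / n ≤ 1 := by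
      rw [div_le_one hn0]
      have : (w + k : ℝ) ≤ n := by exact_mod_cast h
      linarith
    calc (n : ℝ) ^ w * (1 - w * (w + k) / n)
        ≤ (n : ℝ) ^ w * (1 + w * -((w + k - 1) / n)) := by
          gcongr
          rw [mul_neg, ← sub_eq_add_neg, ← mul_div_assoc]
          gcongr
          linarith
      _ ≤ (n : ℝ) ^ w * (1 + -((w + k - 1) / n)) ^ w := by
          gcongr
          exact one_add_mul_le_pow (by linarith) w
      _ = ((n - k + 1 - w : ℕ) : ℝ) ^ w := by rw [hbase, mul_pow]
      _ ≤ (n - k).descFactorial w := by exact_mod_cast Nat.pow_sub_le_descFactorial (n - k) w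
  · refine (mul_nonpos_of_nonneg_of_nonpos (by positivity) ?_).trans (Nat.cast_nonneg _)
    rw [sub_nonpos, one_le_div hn0]
    have : (n : ℝ) ≤ w + k := by exact_mod_cast h.le
    have : (1 : ℝ) ≤ w := by exact_mod_cast hw
    nlinarith

section Graphs

theorem yAdj_of_lt {n : ℕ} (y : EdgeIdx n → Bool) {a b : Fin n} (h : a < b) :
    yAdj y a b = y ⟨(a, b), h⟩ := by
  simp [yAdj, h]

theorem yAdj_comm {n : ℕ} (y : EdgeIdx n → Bool) (a b : Fin n) : yAdj y a b = yAdj y b a := by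
  rcases lt_trichotomy a b with h | rfl | h
  · simp [yAdj, h, h.not_gt]
  · rfl
  · simp [yAdj, h, h.not_gt]

section EdgeCount

variable {V : Type} [Fintype V] (H : SimpleGraph V)

theorem eCount_eq_card_edgeFinset [Fintype H.edgeSet] : eCount H = #H.edgeFinset := by
  rw [eCount, Nat.card_eq_fintype_card, SimpleGraph.edgeFinset_card]

theorem eCount_map {W : Type} [Fintype W] (φ : V ↪ W) : eCount (H.map φ) = eCount H := by
  rw [eCount, SimpleGraph.edgeSet_map, Nat.card_image_of_injective φ.sym2Map.injective, eCount]

end EdgeCount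

open scoped Classical in
theorem card_filter_adj {n : ℕ} (G : SimpleGraph (Fin n)) :
    #{s : EdgeIdx n | G.Adj s.1.1 s.1.2} = eCount G := by
  rw [eCount_eq_card_edgeFinset]
  refine Finset.card_nbij (fun s => s(s.1.1, s.1.2)) (fun s hs => by simpa using hs) ?_ ?_
  · rintro ⟨⟨a, b⟩, hab⟩ - ⟨⟨c, d⟩, hcd⟩ - h
    obtain ⟨rfl, rfl⟩ | ⟨rfl, rfl⟩ := Sym2.eq_iff.1 h
    · rfl
    · exact absurd hab hcd.not_gt
  · intro x hx
    induction x using Sym2.ind with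
    | _ a b =>
      have hab : G.Adj a b := by simpa using hx
      obtain hlt | hlt := lt_or_gt_of_ne hab.ne
      · exact ⟨⟨(a, b), hlt⟩, Finset.mem_coe.2 (Finset.mem_filter_univ _ |>.2 hab), rfl⟩
      · exact ⟨⟨(b, a), hlt⟩, Finset.mem_coe.2 (Finset.mem_filter_univ _ |>.2 hab.symm),
          Sym2.eq_swap⟩

variable {V : Type} [Fintype V] (H : SimpleGraph V) {n : ℕ}

open scoped Classical in
/-- The edges of the copy of `H` placed by `φ` in the complete graph on `n` vertices. -/
def homEdges (φ : V ↪ Fin n) : Finset (EdgeIdx n) := {s | (H.map φ).Adj s.1.1 s.1.2}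

variable {H}

theorem mem_homEdges {φ : V ↪ Fin n} {s : EdgeIdx n} :
    s ∈ homEdges H φ ↔ ∃ a b, H.Adj a b ∧ φ a = s.1.1 ∧ φ b = s.1.2 := by
  simp [homEdges, SimpleGraph.map_adj]

variable (H)

theorem card_homEdges (φ : V ↪ Fin n) : #(homEdges H φ) = eCount H := by
  rw [← eCount_map H φ, ← card_filter_adj]
  congr 1
  ext s
  simp [homEdges]

theorem forall_homEdges_iff (φ : V ↪ Fin n) (y : EdgeIdx n → Bool) :
    (∀ s ∈ homEdges H φ, y s = true) ↔ ∀ a b, H.Adj a b → yAdj y (φ a) (φ b) = true := by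
  constructor
  · intro h a b hab
    obtain hlt | hlt := lt_or_gt_of_ne (φ.injective.ne hab.ne)
    · rw [yAdj_of_lt y hlt]
      exact h _ (mem_homEdges.2 ⟨a, b, hab, rfl, rfl⟩)
    · rw [yAdj_comm, yAdj_of_lt y hlt]
      exact h _ (mem_homEdges.2 ⟨b, a, hab.symm, rfl, rfl⟩)
  · rintro h ⟨⟨i, j⟩, hij⟩ hs
    obtain ⟨a, b, hab, rfl, rfl⟩ := mem_homEdges.1 hs
    exact yAdj_of_lt y hij ▸ h a b hab

theorem homCount_eq_familyCount (y : EdgeIdx n → Bool) :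
    (homCount H y : ℝ) = familyCount (homEdges H (n := n)) y := by
  classical
  have hcongr : homCount H y =
      Nat.card {φ : V ↪ Fin n // ∀ s ∈ homEdges H φ, y s = true} :=
    Nat.card_congr
      { toFun := fun φ => ⟨⟨φ.1, φ.2.1⟩, (forall_homEdges_iff H _ y).2 φ.2.2⟩
        invFun := fun φ => ⟨φ.1, φ.1.injective, (forall_homEdges_iff H _ y).1 φ.2⟩ }
  rw [hcongr, Nat.card_eq_fintype_card, Fintype.card_subtype, ← Finset.sum_boole, familyCount]
  simp only [allTrue]
  congr!

theorem familyDegree_homEdges (s : EdgeIdx n) : familyDegree (homEdges H (n := n)) s =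
    2 * eCount H * (n - 2).descFactorial (Fintype.card V - 2) := by
  classical
  have hdarts : ({φ | s ∈ homEdges H φ} : Finset (V ↪ Fin n)) =
      univ.biUnion fun d : H.Dart => {φ | φ d.fst = s.1.1 ∧ φ d.snd = s.1.2} := by
    ext φ
    simp only [Finset.mem_filter_univ, Finset.mem_biUnion, Finset.mem_univ, true_and, mem_homEdges]
    exact ⟨fun ⟨a, b, hab, h⟩ => ⟨⟨(a, b), hab⟩, h⟩, fun ⟨d, h⟩ => ⟨d.fst, d.snd, d.adj, h⟩⟩
  have hdisj : ((univ : Finset H.Dart) : Set H.Dart).PairwiseDisjoint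
      fun d => ({φ | φ d.fst = s.1.1 ∧ φ d.snd = s.1.2} : Finset (V ↪ Fin n)) := by
    intro d _ d' _ hne
    refine Finset.disjoint_left.2 fun φ hd hd' => hne (SimpleGraph.Dart.ext _ _ (Prod.ext ?_ ?_))
    all_goals simp only [Finset.mem_filter_univ] at hd hd'
    · exact φ.injective (hd.1.trans hd'.1.symm)
    · exact φ.injective (hd.2.trans hd'.2.symm)
  rw [familyDegree, hdarts, Finset.card_biUnion hdisj, eCount_eq_card_edgeFinset,
    ← H.dart_card_eq_twice_card_edges, ← Finset.card_univ]
  refine Finset.sum_const_nat fun d _ => ?_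
  rw [card_embedding_pair d.adj.ne s.2.ne, Fintype.card_fin]

theorem exists_card_eq_three_subset_endpoints {s t : EdgeIdx n} (hst : s ≠ t) :
    ∃ T ⊆ ({s.1.1, s.1.2, t.1.1, t.1.2} : Finset (Fin n)), #T = 3 := by
  refine Finset.exists_subset_card_eq ?_
  by_contra! hcard
  have hpair : ({s.1.1, s.1.2} : Finset (Fin n)) = {s.1.1, s.1.2, t.1.1, t.1.2} :=
    Finset.eq_of_subset_of_card_le (by grind) (by rw [Finset.card_pair s.2.ne]; omega)
  have hs := s.2
  have ht := t.2
  have h1 : t.1.1 ∈ ({s.1.1, s.1.2} : Finset (Fin n)) := by simp [hpair]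
  have h2 : t.1.2 ∈ ({s.1.1, s.1.2} : Finset (Fin n)) := by simp [hpair]
  simp only [Finset.mem_insert, Finset.mem_singleton] at h1 h2
  exact hst (Subtype.ext (Prod.ext (by grind) (by grind)))

theorem familyCodegree_homEdges_le {s t : EdgeIdx n} (hst : s ≠ t) :
    familyCodegree (homEdges H (n := n)) s t ≤
      (Fintype.card V).descFactorial 3 * (n - 3).descFactorial (Fintype.card V - 3) := by
  obtain ⟨T, hT, hcard⟩ := exists_card_eq_three_subset_endpoints hst
  have hrange : ({φ | s ∈ homEdges H φ ∧ t ∈ homEdges H φ} : Finset (V ↪ Fin n)) ⊆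
      ({φ | ∀ i : T, (i : Fin n) ∈ Set.range φ} : Finset (V ↪ Fin n)) := by
    intro φ hφ
    simp only [Finset.mem_filter_univ, mem_homEdges] at hφ ⊢
    obtain ⟨⟨a, b, -, ha, hb⟩, c, d, -, hc, hd⟩ := hφ
    rintro ⟨i, hi⟩
    have := hT hi
    grind
  simpa only [familyCodegree, Fintype.card_fin, Fintype.card_coe, hcard] using
    (Finset.card_le_card hrange).trans
      (card_embedding_range_supset_le (Function.Embedding.subtype (· ∈ T)))

theorem two_le_card_of_eCount_ne_zero (he : eCount H ≠ 0) : 2 ≤ Fintype.card V := by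
  obtain ⟨⟨e, hadj⟩⟩ := (Nat.card_ne_zero.1 he).1
  induction e using Sym2.ind with
  | _ a b => exact Fintype.one_lt_card_iff.2 ⟨a, b, SimpleGraph.Adj.ne hadj⟩

theorem zpow_card_sub_two (he : eCount H ≠ 0) (x : ℝ) :
    x ^ ((Fintype.card V : ℤ) - 2) = x ^ (Fintype.card V - 2) := by
  rw [← zpow_natCast, Nat.cast_sub (two_le_card_of_eCount_ne_zero H he), Nat.cast_two]

/-- The error constant in the degree and codegree estimates for the copies of `H`. -/
def copyErr : ℝ := 2 * eCount H * (Fintype.card V : ℝ) ^ 2 + (Fintype.card V : ℝ) ^ 3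

theorem familyDegree_homEdges_le (s : EdgeIdx n) :
    (familyDegree (homEdges H (n := n)) s : ℝ) ≤
      2 * eCount H * (n : ℝ) ^ ((Fintype.card V : ℤ) - 2) := by
  rw [familyDegree_homEdges]
  obtain he | he := eq_or_ne (eCount H) 0
  · simp [he]
  rw [zpow_card_sub_two H he]
  push_cast
  gcongr
  exact_mod_cast (Nat.descFactorial_le_pow _ _).trans (Nat.pow_le_pow_left (Nat.sub_le n 2) _)

theorem le_familyDegree_homEdges (hn : n ≠ 0) (s : EdgeIdx n) :
    2 * eCount H * (n : ℝ) ^ ((Fintype.card V : ℤ) - 2) -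
      copyErr H * (n : ℝ) ^ ((Fintype.card V : ℤ) - 2) / n ≤
      familyDegree (homEdges H (n := n)) s := by
  obtain he | he := eq_or_ne (eCount H) 0
  · have : 0 ≤ copyErr H * (n : ℝ) ^ ((Fintype.card V : ℤ) - 2) / n := by
      unfold copyErr
      positivity
    simp only [he, Nat.cast_zero, mul_zero, zero_mul, zero_sub]
    exact (neg_nonpos.2 this).trans (Nat.cast_nonneg _)
  have hV := two_le_card_of_eCount_ne_zero H he
  obtain ⟨w, hw⟩ := Nat.exists_eq_add_of_le' hV
  have herr : 2 * (eCount H : ℝ) * (w * (w + 2)) ≤ copyErr H := by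
    unfold copyErr
    rw [hw]
    push_cast
    nlinarith [show (0 : ℝ) ≤ 2 * eCount H * (2 * w + 4) + (w + 2) ^ 3 by positivity]
  rw [familyDegree_homEdges, zpow_card_sub_two H he, hw, Nat.add_sub_cancel]
  push_cast
  calc 2 * (eCount H : ℝ) * (n : ℝ) ^ w - copyErr H * (n : ℝ) ^ w / n
      ≤ 2 * eCount H * (n : ℝ) ^ w - 2 * eCount H * (w * (w + 2)) * (n : ℝ) ^ w / n := by gcongr
    _ = 2 * eCount H * ((n : ℝ) ^ w * (1 - w * (w + (2 : ℕ)) / n)) := by push_cast; ring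
    _ ≤ 2 * eCount H * (n - 2).descFactorial w := by
        gcongr
        exact pow_mul_one_sub_le_descFactorial hn 2 w

theorem familyCodegree_homEdges_le_zpow (hn : n ≠ 0) {s t : EdgeIdx n} (hst : s ≠ t) :
    (familyCodegree (homEdges H (n := n)) s t : ℝ) ≤
      copyErr H * (n : ℝ) ^ ((Fintype.card V : ℤ) - 2) / n := by
  have hn0 : (0 : ℝ) < n := by positivity
  refine (Nat.cast_le.2 (familyCodegree_homEdges_le H hst)).trans ?_
  obtain hV | hV := lt_or_ge (Fintype.card V) 3
  · rw [Nat.descFactorial_of_lt hV, zero_mul, Nat.cast_zero]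
    unfold copyErr
    positivity
  have hdesc : (n - 3).descFactorial (Fintype.card V - 3) ≤ n ^ (Fintype.card V - 3) :=
    (Nat.descFactorial_le_pow _ _).trans (Nat.pow_le_pow_left (Nat.sub_le n 3) _)
  have hzpow : (n : ℝ) ^ ((Fintype.card V : ℤ) - 2) / n = (n : ℝ) ^ (Fintype.card V - 3) := by
    rw [div_eq_mul_inv, ← zpow_sub_one₀ hn0.ne', ← zpow_natCast, Nat.cast_sub hV]
    congr 1
    push_cast
    ring
  rw [mul_div_assoc, hzpow]
  calc (((Fintype.card V).descFactorial 3 * (n - 3).descFactorial (Fintype.card V - 3) : ℕ) : ℝ)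
      ≤ (Fintype.card V : ℝ) ^ 3 * (n : ℝ) ^ (Fintype.card V - 3) := by
        exact_mod_cast Nat.mul_le_mul (Nat.descFactorial_le_pow _ _) hdesc
    _ ≤ copyErr H * (n : ℝ) ^ (Fintype.card V - 3) := by
        gcongr
        exact le_add_of_nonneg_left (by positivity)

theorem isUniformFamily_homEdges (hn : n ≠ 0) :
    IsUniformFamily (homEdges H (n := n)) (eCount H) ((n : ℝ) ^ ((Fintype.card V : ℤ) - 2)) n
      (copyErr H) where
  scale_pos := by positivity
  err_nonneg := by unfold copyErr; positivity
  card_eq := card_homEdges H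
  degree_le := familyDegree_homEdges_le H
  le_degree := le_familyDegree_homEdges H hn
  codegree_le _ _ := familyCodegree_homEdges_le_zpow H hn

end Graphs

theorem discDeriv_edgeSum {n : ℕ} (s : EdgeIdx n) (y : EdgeIdx n → Bool) :
    discDeriv s edgeSum y = 1 := by
  unfold edgeSum
  rw [discDeriv_sum, Finset.sum_eq_single s (fun t _ ht => ?_) (by simp)]
  · simp [discDeriv]
  · simp [discDeriv, Function.update_of_ne ht]

theorem card_edgeIdx_le (n : ℕ) : Fintype.card (EdgeIdx n) ≤ n ^ 2 := by
  simpa [sq] using Fintype.card_le_of_injective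
    (fun s : EdgeIdx n => (s.1 : Fin n × Fin n)) Subtype.val_injective

theorem sq_mul_sq_zpow_sub_two_div {K : Type*} [GroupWithZero K] {x : K} (hx : x ≠ 0) (a : ℤ) :
    x ^ 2 * (x ^ (a - 2)) ^ 2 / x = x ^ (2 * a - 3) := by
  rw [show 2 * a - 3 = 2 + (a - 2) * 2 - 1 by ring, zpow_sub_one₀ hx, zpow_add₀ hx, zpow_mul,
    ← div_eq_mul_inv, zpow_ofNat, zpow_ofNat]

/-! ### The exponential random graph model -/

section ERGM

variable {k : ℕ} (β : Fin (k + 1) → ℝ) (v : Fin (k + 1) → ℕ)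
  (H : ∀ j : Fin (k + 1), SimpleGraph (Fin (v j)))

theorem hasDerivAt_PhiFn (a : ℝ) :
    HasDerivAt (PhiFn β v H) (∑ j, β j * (eCount (H j) : ℝ) *
      (((eCount (H j) - 1 : ℕ) : ℝ) * a ^ (eCount (H j) - 1 - 1))) a :=
  HasDerivAt.fun_sum fun _ _ => (hasDerivAt_pow _ a).const_mul _

theorem abs_deriv_PhiFn_le {a : ℝ} (ha : a ∈ Set.Icc 0 1) :
    |deriv (PhiFn β v H) a| ≤ deriv (PhiFn (fun j => |β j|) v H) 1 := by
  rw [(hasDerivAt_PhiFn β v H a).deriv, (hasDerivAt_PhiFn (fun j => |β j|) v H 1).deriv]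
  refine (Finset.abs_sum_le_sum_abs _ _).trans (Finset.sum_le_sum fun j _ => ?_)
  rw [abs_mul, abs_mul, Nat.abs_cast, abs_of_nonneg (mul_nonneg (Nat.cast_nonneg _)
    (pow_nonneg ha.1 _)), one_pow]
  gcongr
  exact pow_le_one₀ ha.1 ha.2

theorem deriv_PhiFn_abs_eq {β : Fin (k + 1) → ℝ} (hβ : ∀ j, j ≠ 0 → 0 ≤ β j)
    (he : eCount (H 0) = 1) (a : ℝ) :
    deriv (PhiFn (fun j => |β j|) v H) a = deriv (PhiFn β v H) a := by
  rw [(hasDerivAt_PhiFn β v H a).deriv, (hasDerivAt_PhiFn (fun j => |β j|) v H a).deriv]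
  refine Finset.sum_congr rfl fun j _ => ?_
  obtain rfl | hj := eq_or_ne j 0
  · simp [he]
  · rw [abs_of_nonneg (hβ j hj)]

theorem phiFn_eq_sigmoid (a : ℝ) : phiFn β v H a = Real.sigmoid (2 * PhiFn β v H a) := by
  have := Real.exp_pos (2 * PhiFn β v H a)
  rw [phiFn, Real.sigmoid_def, Real.exp_neg]
  field_simp

theorem sigmaSq_pos (hdob : deriv (PhiFn (fun j => |β j|) v H) 1 < 2) {p : ℝ}
    (hp : p ∈ Set.Ioo 0 1) {n : ℕ} (hn : 2 ≤ n) : 0 < sigmaSq β v H p n := by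
  have hp0 : 0 < p := hp.1
  have hq : 0 < 1 - p := sub_pos.2 hp.2
  have hn1 : (0 : ℝ) < n - 1 := by
    have : (2 : ℝ) ≤ n := by exact_mod_cast hn
    linarith
  have hderiv : deriv (PhiFn β v H) p < 2 :=
    (le_of_abs_le (abs_deriv_PhiFn_le β v H (Set.Ioo_subset_Icc_self hp))).trans_lt hdob
  have hden : 0 < 1 - 2 * p * (1 - p) * deriv (PhiFn β v H) p := by
    nlinarith [mul_lt_mul_of_pos_left hderiv (mul_pos hp0 hq), sq_nonneg (2 * p - 1)]
  unfold sigmaSq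
  positivity

theorem ergmWeight_pos (n : ℕ) (y : EdgeIdx n → Bool) : 0 < ergmWeight β v H n y :=
  Real.exp_pos _

theorem ergmZ_pos (n : ℕ) : 0 < ergmZ β v H n :=
  Finset.sum_pos (fun y _ => ergmWeight_pos β v H n y) Finset.univ_nonempty

theorem condProb_ergmProb {n : ℕ} (s : EdgeIdx n) (y : EdgeIdx n → Bool) :
    condProb (ergmProb β v H n) s y = Real.sigmoid
      (∑ j, β j / (n : ℝ) ^ ((Fintype.card (Fin (v j)) : ℤ) - 2) *
        discDeriv s (familyCount (homEdges (H j) (n := n))) y) := by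
  have henergy : ∑ j, β j / (n : ℝ) ^ ((Fintype.card (Fin (v j)) : ℤ) - 2) *
        discDeriv s (familyCount (homEdges (H j) (n := n))) y =
      ∑ j, β j * (n : ℝ) ^ ((2 : ℤ) - (v j : ℤ)) * homCount (H j) (Function.update y s true) -
        ∑ j, β j * (n : ℝ) ^ ((2 : ℤ) - (v j : ℤ)) *
          homCount (H j) (Function.update y s false) := by
    rw [← Finset.sum_sub_distrib]
    refine Finset.sum_congr rfl fun j _ => ?_
    rw [Fintype.card_fin, ← neg_sub (v j : ℤ) 2, zpow_neg, discDeriv, homCount_eq_familyCount,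
      homCount_eq_familyCount]
    ring
  have hZ := ergmZ_pos β v H n
  have htrue := ergmWeight_pos β v H n (Function.update y s true)
  have hfalse := ergmWeight_pos β v H n (Function.update y s false)
  have hratio : Real.sigmoid (∑ j, β j / (n : ℝ) ^ ((Fintype.card (Fin (v j)) : ℤ) - 2) *
        discDeriv s (familyCount (homEdges (H j) (n := n))) y) =
      (1 + ergmWeight β v H n (Function.update y s false) /
        ergmWeight β v H n (Function.update y s true))⁻¹ := by
    rw [henergy, Real.sigmoid_def, neg_sub, Real.exp_sub, ergmWeight, ergmWeight]
  rw [hratio, condProb, ergmProb, ergmProb]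
  field_simp

theorem isDobrushinGibbs_ergmProb (hdob : deriv (PhiFn (fun j => |β j|) v H) 1 < 2) {n : ℕ}
    (hn : n ≠ 0) :
    IsDobrushinGibbs (ergmProb β v H n) β (fun j => homEdges (H j)) (fun j => eCount (H j))
      (fun j => (n : ℝ) ^ ((Fintype.card (Fin (v j)) : ℤ) - 2)) n (fun j => copyErr (H j))
      (deriv (PhiFn (fun j => |β j|) v H) 1 / 2) where
  pos y := div_pos (ergmWeight_pos β v H n y) (ergmZ_pos β v H n)
  sum_eq_one := by
    simp only [ergmProb, ← Finset.sum_div]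
    exact div_self (ergmZ_pos β v H n).ne'
  condProb_eq := condProb_ergmProb β v H
  family j := isUniformFamily_homEdges (H j) hn
  one_le := by exact_mod_cast Nat.one_le_iff_ne_zero.2 hn
  lt_one := by linarith
  influence_le := by
    rw [mul_div_cancel₀ _ two_ne_zero, (hasDerivAt_PhiFn (fun j => |β j|) v H 1).deriv]
    simp only [one_pow, mul_one, mul_assoc, le_refl]

theorem discDeriv_homCount_sub_mul_Wn {p : ℝ} {n : ℕ} (hσ : 0 < sigmaSq β v H p n)
    {V : Type} [Fintype V] (G : SimpleGraph V) (c : ℝ) (s : EdgeIdx n) (y : EdgeIdx n → Bool) :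
    discDeriv s (fun y => (homCount G y : ℝ) - c * √(sigmaSq β v H p n) * Wn β v H p n y) y =
      discDeriv s (familyCount (homEdges G (n := n))) y - c := by
  have hedge := discDeriv_edgeSum s y
  simp only [discDeriv, Wn, homCount_eq_familyCount] at hedge ⊢
  field_simp [(Real.sqrt_pos.2 hσ).ne']
  linear_combination -c * hedge

end ERGM

theorem ergm_hom_variance_dobrushin_general {k : ℕ} (β : Fin (k + 1) → ℝ)
    (v : Fin (k + 1) → ℕ) (H : ∀ j : Fin (k + 1), SimpleGraph (Fin (v j)))
    (p : ℝ) (hfix : phiFn β v H p = p)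
    (hdob : deriv (PhiFn (fun j => |β j|) v H) 1 < 2)
    {V : Type} [Fintype V] (G : SimpleGraph V) :
    ∃ C : ℝ, 0 < C ∧ ∀ n : ℕ, 2 ≤ n →
      ergmVar β v H n (fun y => (homCount G y : ℝ) -
          2 * (n : ℝ) ^ ((Fintype.card V : ℤ) - 2) * (eCount G : ℝ) * p ^ (eCount G - 1) *
            Real.sqrt (sigmaSq β v H p n) * Wn β v H p n y) ≤
        C * (n : ℝ) ^ (2 * (Fintype.card V : ℤ) - 3) := by
  rw [phiFn_eq_sigmoid] at hfix
  have hp : p ∈ Set.Ioo 0 1 := hfix ▸ ⟨Real.sigmoid_pos _, Real.sigmoid_lt_one _⟩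
  obtain ⟨K, hK⟩ : ∃ K : ℝ, ∀ n : ℕ, 2 ≤ n → ∀ g : (EdgeIdx n → Bool) → ℝ,
      (∀ s y, discDeriv s g y = discDeriv s (familyCount (homEdges G (n := n))) y -
        2 * eCount G * (n : ℝ) ^ ((Fintype.card V : ℤ) - 2) * p ^ (eCount G - 1)) →
      ergmVar β v H n g ≤
        K * (Fintype.card (EdgeIdx n) * ((n : ℝ) ^ ((Fintype.card V : ℤ) - 2)) ^ 2 / n) :=
    ⟨_, fun n hn _ => (isDobrushinGibbs_ergmProb β v H hdob (by omega)).wVar_le_of_discDeriv_eq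
      (isUniformFamily_homEdges G (by omega)) (Set.Ioo_subset_Icc_self hp) hfix⟩
  refine ⟨|K| + 1, by positivity, fun n hn => (hK n hn _ fun s y => ?_).trans ?_⟩
  · rw [discDeriv_homCount_sub_mul_Wn β v H (sigmaSq_pos β v H hdob hp hn) G]
    ring
  · rw [← sq_mul_sq_zpow_sub_two_div (by positivity)]
    gcongr
    · linarith [le_abs_self K]
    · exact_mod_cast card_edgeIdx_le n

/-- **Lemma 5.1**: higher-order variance bound for subgraph counts in Dobrushin's uniqueness
region: `Var(|Hom(H,G_Y)| − 2 n^{v−2} e p^{e−1} σ_n W_n) ≤ C n^{2v−3}`. -/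
theorem ergm_hom_variance_dobrushin {k : ℕ} (β : Fin (k + 1) → ℝ) (v : Fin (k + 1) → ℕ)
    (H : ∀ j : Fin (k + 1), SimpleGraph (Fin (v j)))
    -- `β₂, …, β_k > 0`
    (hβ : ∀ j : Fin (k + 1), j ≠ 0 → 0 < β j)
    -- `H₁` is a single edge
    (hv0 : v 0 = 2) (he0 : eCount (H 0) = 1)
    -- the graphs have no isolated vertices
    (hnoiso : ∀ (j : Fin (k + 1)) (a : Fin (v j)), ∃ b, (H j).Adj a b)
    -- `H₂, …, H_k` have at least two edges
    (hedges : ∀ j : Fin (k + 1), j ≠ 0 → 2 ≤ eCount (H j))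
    -- the subcritical region: unique fixed point `p ∈ (0,1)` with `φ_β'(p) < 1`
    (p : ℝ) (hp : p ∈ Set.Ioo (0 : ℝ) 1)
    (hfix : phiFn β v H p = p)
    (huniq : ∀ q ∈ Set.Ioo (0 : ℝ) 1, phiFn β v H q = q → q = p)
    (hsub : deriv (phiFn β v H) p < 1)
    -- Dobrushin's uniqueness region `Φ_β'(1) < 2`
    (hdob : deriv (PhiFn β v H) 1 < 2)
    -- the fixed graph `H`, possibly with isolated vertices, with `e ≥ 1` edges
    (vH : ℕ) (Hg : SimpleGraph (Fin vH)) (hHe : 1 ≤ eCount Hg) :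
    ∃ C : ℝ, 0 < C ∧ ∀ n : ℕ, 2 ≤ n →
      ergmVar β v H n (fun y => (homCount Hg y : ℝ) -
          2 * (n : ℝ) ^ ((vH : ℤ) - 2) * (eCount Hg : ℝ) * p ^ (eCount Hg - 1) *
            Real.sqrt (sigmaSq β v H p n) * Wn β v H p n y) ≤
        C * (n : ℝ) ^ (2 * (vH : ℤ) - 3) := by
  simpa only [Fintype.card_fin] using ergm_hom_variance_dobrushin_general β v H p hfix
    (by rwa [deriv_PhiFn_abs_eq v H (fun j hj => (hβ j hj).le) he0]) Hg
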